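/- arXiv:2501.18570 — 3 statements merged into one kernel-verified Lean document; each statement's English description precedes it below -/
import Mathlib

section
/- Let n ≥ 4 and let e, f be two vertex-disjoint edges of the complete graph K_n. The number of spanning trees of K_n containing both e and f equals 4·n^{n−4}; equivalently, the probability that a uniformly random spanning tree contains both e and f equals 4/n² = (2/n)·(2/n), so the events {e ∈ T} and {f ∈ T} are independent. -/
/-
Let a forest `F` on `n` vertices have components of sizes `s₁, …, sₖ`. It extends to exactly
`s₁ ⋯ sₖ · n ^ (k - 2)` spanning trees. This follows by induction on `k`: a tree containing `F` has
`k - 1` edges outside `F`, so double counting pairs (tree, edge of it outside `F`) expresses the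
count for `F` through the counts for the forests `F ⊔ edge u v`, where joining components of sizes
`s` and `t` multiplies the product of the sizes by `1 / s + 1 / t`.
-/

open Finset SimpleGraph

namespace SpanningTreeCount

variable {V : Type*}

lemma not_reachable_of_isIsolated {G : SimpleGraph V} {u v : V} (hu : G.IsIsolated u)
    (huv : u ≠ v) : ¬G.Reachable u v :=
  not_reachable_of_neighborSet_left_eq_empty huv hu.neighborSet_eq_empty

lemma supp_connectedComponentMk_of_isIsolated {G : SimpleGraph V} {v : V} (h : G.IsIsolated v) :
    (G.connectedComponentMk v).supp = {v} := by
  ext x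
  rw [ConnectedComponent.mem_supp_iff, ConnectedComponent.eq, Set.mem_singleton_iff]
  exact ⟨fun hx => by_contra fun hne => not_reachable_of_isIsolated h (Ne.symm hne) hx.symm,
    fun hx => hx ▸ .rfl⟩

lemma card_connectedComponent_bot :
    Nat.card (⊥ : SimpleGraph V).ConnectedComponent = Nat.card V :=
  (Nat.card_eq_of_bijective (connectedComponentMk ⊥)
    ⟨fun _ _ h => by simpa using h, Quot.mk_surjective⟩).symm

section SupEdge

variable {G : SimpleGraph V} {u v : V}

lemma reachable_sup_edge_iff {x y : V} :
    (G ⊔ edge u v).Reachable x y ↔ G.Reachable x y ∨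
      (G.Reachable x u ∧ G.Reachable v y) ∨ (G.Reachable x v ∧ G.Reachable u y) := by
  have huv : (G ⊔ edge u v).Reachable u v := by
    obtain rfl | hne := eq_or_ne u v
    · rfl
    · exact Adj.reachable (by simp [edge_adj, hne])
  have mono {a b : V} (h : G.Reachable a b) : (G ⊔ edge u v).Reachable a b := h.mono le_sup_left
  constructor
  · rintro ⟨p⟩
    induction p with
    | nil => exact .inl .rfl
    | @cons x z y hxz _ ih =>
      obtain hxz | ⟨⟨rfl, rfl⟩ | ⟨rfl, rfl⟩, -⟩ := by simpa only [sup_adj, edge_adj] using hxz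
      · have trans {w : V} (h : G.Reachable z w) : G.Reachable x w := hxz.reachable.trans h
        exact ih.imp trans (.imp (.imp_left trans) (.imp_left trans))
      · obtain h | ⟨-, h⟩ | ⟨-, h⟩ := ih
        exacts [.inr (.inl ⟨.rfl, h⟩), .inr (.inl ⟨.rfl, h⟩), .inl h]
      · obtain h | ⟨-, h⟩ | ⟨-, h⟩ := ih
        exacts [.inr (.inr ⟨.rfl, h⟩), .inl h, .inr (.inr ⟨.rfl, h⟩)]
  · rintro (h | ⟨hx, hy⟩ | ⟨hx, hy⟩)
    exacts [mono h, (mono hx).trans (huv.trans (mono hy)),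
      (mono hx).trans (huv.symm.trans (mono hy))]

lemma supp_connectedComponentMk_sup_edge_left :
    ((G ⊔ edge u v).connectedComponentMk u).supp =
      (G.connectedComponentMk u).supp ∪ (G.connectedComponentMk v).supp := by
  ext x
  simp only [Set.mem_union, ConnectedComponent.mem_supp_iff, ConnectedComponent.eq,
    reachable_sup_edge_iff, Reachable.rfl, and_true]
  grind [Reachable.trans, Reachable.symm]

lemma supp_connectedComponentMk_sup_edge_of_not_reachable {x : V} (hu : ¬G.Reachable x u)
    (hv : ¬G.Reachable x v) :
    ((G ⊔ edge u v).connectedComponentMk x).supp = (G.connectedComponentMk x).supp := by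
  ext y
  simp only [ConnectedComponent.mem_supp_iff, ConnectedComponent.eq, reachable_sup_edge_iff,
    reachable_comm (u := u), reachable_comm (u := v), hu, hv, and_false, or_false]

lemma bijective_map_sup_edge (h : ¬G.Reachable u v) :
    Function.Bijective fun c : {c : G.ConnectedComponent // c ≠ G.connectedComponentMk v} =>
      c.1.map (Hom.ofLE (le_sup_left : G ≤ G ⊔ edge u v)) := by
  constructor
  · rintro ⟨c, hc⟩ ⟨d, hd⟩ hcd
    induction c, d using ConnectedComponent.ind₂ with | _ x y
    simp only [ne_eq, ConnectedComponent.eq] at hc hd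
    simp only [ConnectedComponent.map_mk, Hom.coe_ofLE, id, ConnectedComponent.eq,
      reachable_sup_edge_iff, hc, reachable_comm (u := v), hd, and_false, false_and, or_false]
      at hcd
    simpa using hcd
  · intro c
    induction c using ConnectedComponent.ind with | _ x
    by_cases hx : G.Reachable x v
    · exact ⟨⟨G.connectedComponentMk u, by simpa using h⟩, by
        simp [reachable_sup_edge_iff, hx.symm]⟩
    · exact ⟨⟨G.connectedComponentMk x, by simpa using hx⟩, rfl⟩

lemma supp_map_sup_edge_of_ne {c : G.ConnectedComponent} (hu : c ≠ G.connectedComponentMk u)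
    (hv : c ≠ G.connectedComponentMk v) :
    (c.map (Hom.ofLE (le_sup_left : G ≤ G ⊔ edge u v))).supp = c.supp := by
  induction c using ConnectedComponent.ind with | _ x
  exact supp_connectedComponentMk_sup_edge_of_not_reachable (by simpa using hu) (by simpa using hv)

end SupEdge

section Components

variable {G : SimpleGraph V} {u v : V}

/-- The product of the numbers of vertices of the connected components of `G`. This is meaningful
only for finite `V`, since `Set.ncard` and `finprod` take junk values otherwise. -/
noncomputable def componentSizeProd (G : SimpleGraph V) : ℕ :=
  ∏ᶠ c : G.ConnectedComponent, c.supp.ncard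

lemma componentSizeProd_bot : componentSizeProd (⊥ : SimpleGraph V) = 1 :=
  finprod_eq_one_of_forall_eq_one fun c => by
    induction c using ConnectedComponent.ind with | _ x
    rw [supp_connectedComponentMk_of_isIsolated .bot, Set.ncard_singleton]

lemma componentSizeProd_of_connected (hG : G.Connected) : componentSizeProd G = Nat.card V := by
  have := hG.nonempty
  have := hG.preconnected.subsingleton_connectedComponent
  have hsupp (c : G.ConnectedComponent) : c.supp = Set.univ :=
    Set.eq_univ_of_forall fun _ => Subsingleton.elim _ c
  obtain ⟨_⟩ := nonempty_unique G.ConnectedComponent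
  rw [componentSizeProd, finprod_unique, hsupp, Set.ncard_univ]

variable [Finite V]

lemma ncard_supp_pos (c : G.ConnectedComponent) : 0 < c.supp.ncard :=
  (Set.ncard_pos).2 c.nonempty_supp

lemma card_connectedComponent_sup_edge (h : ¬G.Reachable u v) :
    Nat.card (G ⊔ edge u v).ConnectedComponent + 1 = Nat.card G.ConnectedComponent := by
  classical
  have := Fintype.ofFinite G.ConnectedComponent
  rw [← Nat.card_eq_of_bijective _ (bijective_map_sup_edge h), Nat.card_eq_fintype_card,
    Nat.card_eq_fintype_card, Fintype.card_subtype_compl, Fintype.card_subtype_eq]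
  exact Nat.sub_add_cancel (Fintype.card_pos_iff.2 ⟨G.connectedComponentMk u⟩)

lemma ncard_supp_map_sup_edge (huv : ¬G.Reachable u v) :
    ((G.connectedComponentMk u).map (Hom.ofLE (le_sup_left : G ≤ G ⊔ edge u v))).supp.ncard =
      (G.connectedComponentMk u).supp.ncard + (G.connectedComponentMk v).supp.ncard := by
  rw [ConnectedComponent.map_mk, Hom.coe_ofLE, id, supp_connectedComponentMk_sup_edge_left]
  exact Set.ncard_union_eq (pairwise_disjoint_supp_connectedComponent G (by simpa using huv))

lemma componentSizeProd_sup_edge (h : ¬G.Reachable u v) :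
    (componentSizeProd (G ⊔ edge u v) : ℚ) = componentSizeProd G *
      (1 / (G.connectedComponentMk u).supp.ncard + 1 / (G.connectedComponentMk v).supp.ncard) := by
  classical
  have := Fintype.ofFinite G.ConnectedComponent
  have := Fintype.ofFinite (G ⊔ edge u v).ConnectedComponent
  have hu := (ncard_supp_pos (G.connectedComponentMk u)).ne'
  have hv := (ncard_supp_pos (G.connectedComponentMk v)).ne'
  have huv : G.connectedComponentMk u ≠ G.connectedComponentMk v := by simpa using h
  rw [componentSizeProd, componentSizeProd, finprod_eq_prod_of_fintype,
    finprod_eq_prod_of_fintype, ← (bijective_map_sup_edge h).prod_comp,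
    Fintype.prod_eq_mul_prod_subtype_ne (fun c : G.ConnectedComponent => c.supp.ncard)
      (G.connectedComponentMk v),
    Fintype.prod_eq_mul_prod_compl ⟨_, huv⟩,
    Fintype.prod_eq_mul_prod_compl (⟨_, huv⟩ : {c // c ≠ G.connectedComponentMk v}),
    ncard_supp_map_sup_edge h, prod_congr rfl fun c hc => congrArg Set.ncard
      (supp_map_sup_edge_of_ne (by simpa [Subtype.ext_iff] using hc) c.2)]
  push_cast
  field_simp
  ring

end Components

section ComponentSums

variable [Fintype V] (G : SimpleGraph V)

lemma sum_connectedComponentMk [Fintype G.ConnectedComponent] {M : Type*} [AddCommMonoid M]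
    (f : G.ConnectedComponent → M) :
    ∑ v, f (G.connectedComponentMk v) = ∑ c : G.ConnectedComponent, c.supp.ncard • f c := by
  classical
  rw [← sum_fiberwise univ G.connectedComponentMk]
  refine sum_congr rfl fun c _ => ?_
  rw [sum_congr rfl fun v hv => by rw [(mem_filter.1 hv).2], sum_const, ← Set.ncard_coe_finset]
  simp [ConnectedComponent.supp]

open Classical in
lemma sum_inv_ncard_supp_of_not_reachable (u : V) :
    ∑ v with ¬G.Reachable u v, (1 / (G.connectedComponentMk v).supp.ncard : ℚ) =
      Nat.card G.ConnectedComponent - 1 := by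
  have hone (c : G.ConnectedComponent) : (c.supp.ncard : ℚ) * (1 / c.supp.ncard) = 1 :=
    mul_one_div_cancel (mod_cast (ncard_supp_pos c).ne')
  have := sum_connectedComponentMk G
    fun c => if G.connectedComponentMk u ≠ c then 1 / (c.supp.ncard : ℚ) else 0
  simp_rw [ne_eq, ConnectedComponent.eq, ← sum_filter, nsmul_eq_mul, mul_ite, mul_zero, hone]
    at this
  rw [this, Nat.card_eq_fintype_card, ← sum_filter, sum_const, filter_ne,
    card_erase_of_mem (mem_univ _)]
  simp [Fintype.card_pos_iff.2 ⟨G.connectedComponentMk u⟩]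

open Classical in
lemma sum_not_reachable_inv_ncard_supp :
    ∑ p : V × V with ¬G.Reachable p.1 p.2,
      (1 / (G.connectedComponentMk p.1).supp.ncard +
        1 / (G.connectedComponentMk p.2).supp.ncard : ℚ) =
      2 * Nat.card V * (Nat.card G.ConnectedComponent - 1) := by
  have hsnd : ∑ p : V × V with ¬G.Reachable p.1 p.2,
      (1 / (G.connectedComponentMk p.2).supp.ncard : ℚ) =
      Nat.card V * (Nat.card G.ConnectedComponent - 1) := by
    simp_rw [sum_filter, Fintype.sum_prod_type, ← sum_filter, sum_inv_ncard_supp_of_not_reachable,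
      sum_const, nsmul_eq_mul, card_univ, Nat.card_eq_fintype_card]
  have hfst : ∑ p : V × V with ¬G.Reachable p.1 p.2,
      (1 / (G.connectedComponentMk p.1).supp.ncard : ℚ) =
      Nat.card V * (Nat.card G.ConnectedComponent - 1) := by
    rw [← hsnd]
    exact sum_equiv (Equiv.prodComm V V) (by simp [reachable_comm]) (by simp)
  rw [sum_add_distrib, hfst, hsnd]
  ring

open Classical in
lemma sum_componentSizeProd_sup_edge :
    ∑ p : V × V with ¬G.Reachable p.1 p.2, (componentSizeProd (G ⊔ edge p.1 p.2) : ℚ) =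
      componentSizeProd G * (2 * Nat.card V * (Nat.card G.ConnectedComponent - 1)) := by
  rw [← sum_not_reachable_inv_ncard_supp, mul_sum]
  exact sum_congr rfl fun p hp => componentSizeProd_sup_edge (mem_filter.1 hp).2

end ComponentSums

section Forests

variable {F T : SimpleGraph V}

lemma reachable_iff_adj_of_adj_of_le (hT : T.IsAcyclic) (hle : F ≤ T) {u v : V} (h : T.Adj u v) :
    F.Reachable u v ↔ F.Adj u v :=
  ((isAcyclic_iff_forall_adj_isBridge.1 hT h).anti hle).reachable_iff_adj

lemma card_edgeSet_add_card_connectedComponent [Finite V] (hF : F.IsAcyclic) :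
    F.edgeSet.ncard + Nat.card F.ConnectedComponent = Nat.card V := by
  induction F using WellFoundedLT.induction with | ind F ih
  obtain rfl | hne := eq_or_ne F ⊥
  · simp [card_connectedComponent_bot]
  obtain ⟨u, v, huv⟩ := ne_bot_iff_exists_adj.1 hne
  have hbridge : ¬(F \ edge u v).Reachable u v :=
    isBridge_iff.1 (isAcyclic_iff_forall_adj_isBridge.1 hF huv)
  have hsup : F \ edge u v ⊔ edge u v = F :=
    sdiff_sup_cancel ((edge_le_iff F).2 (.inr huv))
  have hlt : F \ edge u v < F :=
    sdiff_le.lt_of_ne fun h => hbridge (h.symm ▸ huv.reachable)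
  have hedges : (F \ edge u v).edgeSet.ncard + 1 = F.edgeSet.ncard := by
    rw [edgeSet_sdiff, edgeSet_edge_of_ne huv.ne]
    exact Set.ncard_sdiff_singleton_add_one huv
  have hcomponents := card_connectedComponent_sup_edge hbridge
  rw [hsup] at hcomponents
  have := ih _ hlt (hF.anti hlt.le)
  omega

open Classical in
lemma card_adj_and_not_reachable [Fintype V] (hT : T.IsTree) (hF : F ≤ T) :
    #{p : V × V | T.Adj p.1 p.2 ∧ ¬F.Reachable p.1 p.2} =
      2 * (Nat.card F.ConnectedComponent - 1) := by
  have hpairs : ({p : V × V | T.Adj p.1 p.2 ∧ ¬F.Reachable p.1 p.2} : Finset (V × V)) =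
      ({(u, v) | (T \ F).Adj u v} : Finset (V × V)) := by
    ext p
    simpa using fun h => (reachable_iff_adj_of_adj_of_le hT.isAcyclic hF h).not
  have hforest := card_edgeSet_add_card_connectedComponent (hT.isAcyclic.anti hF)
  have htree : T.edgeSet.ncard + 1 = Nat.card V := (isTree_iff_connected_and_card.1 hT).2
  rw [hpairs, ← two_mul_card_edgeFinset, ← Set.ncard_coe_finset, coe_edgeFinset, edgeSet_sdiff,
    Set.ncard_sdiff (edgeSet_mono hF)]
  omega

end Forests

section TreeExtensions

variable {F : SimpleGraph V}

/-- The number of spanning trees of the complete graph on `V` which contain the graph `F`. -/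
noncomputable def treeExtensionCount (F : SimpleGraph V) : ℕ :=
  Nat.card {T : SimpleGraph V // T.IsTree ∧ F ≤ T}

lemma treeExtensionCount_of_isTree (hF : F.IsTree) : treeExtensionCount F = 1 := by
  have (T : {T : SimpleGraph V // T.IsTree ∧ F ≤ T}) : T = ⟨F, hF, le_rfl⟩ :=
    Subtype.ext (((isTree_iff_minimal_connected.1 T.2.1).eq_of_le hF.connected T.2.2).symm)
  exact Nat.card_eq_one_iff_exists.2 ⟨_, this⟩

open Classical in
lemma sum_treeExtensionCount_sup_edge [Fintype V] :
    ∑ p : V × V with ¬F.Reachable p.1 p.2, treeExtensionCount (F ⊔ edge p.1 p.2) =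
      2 * (Nat.card F.ConnectedComponent - 1) * treeExtensionCount F := by
  have hcount (G : SimpleGraph V) : treeExtensionCount G = #{T | T.IsTree ∧ G ≤ T} :=
    Nat.subtype_card _ (by simp)
  calc
    _ = ∑ p : V × V with ¬F.Reachable p.1 p.2,
          #(({T | T.IsTree ∧ F ≤ T} : Finset (SimpleGraph V)).bipartiteAbove
            (fun p T => T.Adj p.1 p.2) p) := by
      refine sum_congr rfl fun p hp => ?_
      have hne : p.1 ≠ p.2 := fun h => (mem_filter.1 hp).2 (h ▸ .rfl)
      rw [hcount, bipartiteAbove, filter_filter]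
      simp only [sup_le_iff, edge_le_iff, hne, false_or, and_assoc]
    _ = ∑ T : SimpleGraph V with T.IsTree ∧ F ≤ T,
          #{p : V × V | T.Adj p.1 p.2 ∧ ¬F.Reachable p.1 p.2} := by
      rw [sum_card_bipartiteAbove_eq_sum_card_bipartiteBelow]
      simp only [bipartiteBelow, filter_filter, and_comm]
    _ = ∑ T : SimpleGraph V with T.IsTree ∧ F ≤ T, 2 * (Nat.card F.ConnectedComponent - 1) :=
      sum_congr rfl fun T hT =>
        card_adj_and_not_reachable (mem_filter.1 hT).2.1 (mem_filter.1 hT).2.2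
    _ = _ := by rw [sum_const, smul_eq_mul, hcount, mul_comm]

lemma treeExtensionCount_of_isAcyclic [Finite V] [Nonempty V] (hF : F.IsAcyclic) :
    (treeExtensionCount F : ℚ) =
      componentSizeProd F * (Nat.card V : ℚ) ^ ((Nat.card F.ConnectedComponent : ℤ) - 2) := by
  classical
  have := Fintype.ofFinite V
  have hV : (Nat.card V : ℚ) ≠ 0 := mod_cast Nat.card_pos.ne'
  obtain ⟨k, hk⟩ : ∃ k, Nat.card F.ConnectedComponent = k + 1 :=
    Nat.exists_eq_succ_of_ne_zero Nat.card_pos.ne'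
  induction k generalizing F with
  | zero =>
    have hconn : F.Connected := ⟨fun u v => ConnectedComponent.exact
      ((Nat.card_eq_one_iff_unique.1 hk).1.elim _ _)⟩
    rw [treeExtensionCount_of_isTree ⟨hconn, hF⟩, componentSizeProd_of_connected hconn, hk]
    simp
  | succ k ih =>
    have hdouble := sum_treeExtensionCount_sup_edge (F := F)
    refine mul_left_cancel₀ (by positivity : (2 * (k + 1) : ℚ) ≠ 0) ?_
    calc
      (2 * (k + 1) : ℚ) * treeExtensionCount F
        = ∑ p : V × V with ¬F.Reachable p.1 p.2,
            (treeExtensionCount (F ⊔ edge p.1 p.2) : ℚ) := by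
        rw [← Nat.cast_sum, hdouble, hk]
        push_cast [add_tsub_cancel_right]
        ring
      _ = ∑ p : V × V with ¬F.Reachable p.1 p.2,
            (componentSizeProd (F ⊔ edge p.1 p.2) : ℚ) * (Nat.card V : ℚ) ^ ((k : ℤ) - 1) := by
        refine sum_congr rfl fun p hp => ?_
        have hp := (mem_filter.1 hp).2
        have hcard : Nat.card (F ⊔ edge p.1 p.2).ConnectedComponent = k + 1 := by
          have := card_connectedComponent_sup_edge hp
          omega
        rw [ih (hF.sup_edge_of_not_reachable hp) hcard, hcard,
          show ((k + 1 : ℕ) : ℤ) - 2 = k - 1 by push_cast; ring]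
      _ = _ := by
        rw [← sum_mul, sum_componentSizeProd_sup_edge, hk,
          show ((k + 1 + 1 : ℕ) : ℤ) - 2 = k - 1 + 1 by push_cast; ring, zpow_add_one₀ hV]
        push_cast
        ring

end TreeExtensions

section IsolatedEdges

variable [Finite V] {G : SimpleGraph V} {a b c d : V}

lemma componentSizeProd_sup_edge_of_isIsolated (ha : G.IsIsolated a) (hb : G.IsIsolated b)
    (hab : a ≠ b) : (componentSizeProd (G ⊔ edge a b) : ℚ) = 2 * componentSizeProd G := by
  rw [componentSizeProd_sup_edge (not_reachable_of_isIsolated ha hab),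
    supp_connectedComponentMk_of_isIsolated ha, supp_connectedComponentMk_of_isIsolated hb,
    Set.ncard_singleton, Set.ncard_singleton]
  push_cast
  ring

lemma treeExtensionCount_sup_edge_of_isIsolated (hG : G.IsAcyclic) (ha : G.IsIsolated a)
    (hb : G.IsIsolated b) (hab : a ≠ b) :
    (treeExtensionCount (G ⊔ edge a b) : ℚ) = 2 / Nat.card V * treeExtensionCount G := by
  have : Nonempty V := ⟨a⟩
  have hV : (Nat.card V : ℚ) ≠ 0 := mod_cast Nat.card_pos.ne'
  have hnr := not_reachable_of_isIsolated ha hab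
  rw [treeExtensionCount_of_isAcyclic (hG.sup_edge_of_not_reachable hnr),
    treeExtensionCount_of_isAcyclic hG, componentSizeProd_sup_edge_of_isIsolated ha hb hab,
    ← card_connectedComponent_sup_edge hnr, Nat.cast_succ, add_sub_right_comm, zpow_add_one₀ hV]
  field_simp

/-- Cayley's formula. -/
lemma treeExtensionCount_bot [Nontrivial V] :
    treeExtensionCount (⊥ : SimpleGraph V) = Nat.card V ^ (Nat.card V - 2) := by
  have h := treeExtensionCount_of_isAcyclic (isAcyclic_bot (V := V))
  rw [componentSizeProd_bot, card_connectedComponent_bot, Nat.cast_one, one_mul,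
    ← Nat.cast_ofNat, ← Nat.cast_sub Finite.one_lt_card, zpow_natCast] at h
  exact_mod_cast h

lemma natCard_isTree_and_adj (hab : a ≠ b) :
    (Nat.card {T : SimpleGraph V // T.IsTree ∧ T.Adj a b} : ℚ) =
      2 / Nat.card V * (Nat.card V : ℚ) ^ (Nat.card V - 2) := by
  have : Nontrivial V := ⟨a, b, hab⟩
  have h := treeExtensionCount_sup_edge_of_isIsolated isAcyclic_bot .bot .bot hab
  rw [treeExtensionCount_bot, bot_sup_eq] at h
  simpa [treeExtensionCount, edge_le_iff, -edge_le, hab] using h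

lemma natCard_isTree_and_adj_and_adj (hab : a ≠ b) (hac : a ≠ c) (had : a ≠ d)
    (hbc : b ≠ c) (hbd : b ≠ d) (hcd : c ≠ d) :
    (Nat.card {T : SimpleGraph V // T.IsTree ∧ T.Adj a b ∧ T.Adj c d} : ℚ) =
      2 / Nat.card V * (2 / Nat.card V * (Nat.card V : ℚ) ^ (Nat.card V - 2)) := by
  have hacyc : (edge a b).IsAcyclic := by
    simpa using isAcyclic_bot.sup_edge_of_not_reachable (not_reachable_of_isIsolated .bot hab)
  have hc : (edge a b).IsIsolated c := by simp [IsIsolated, edge_adj, hac.symm, hbc.symm]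
  have hd : (edge a b).IsIsolated d := by simp [IsIsolated, edge_adj, had.symm, hbd.symm]
  have h := treeExtensionCount_sup_edge_of_isIsolated hacyc hc hd hcd
  rw [← natCard_isTree_and_adj hab]
  simpa [treeExtensionCount, edge_le_iff, -edge_le, hab, hcd] using h

end IsolatedEdges

end SpanningTreeCount

open SpanningTreeCount in
theorem spanning_trees_containing_two_disjoint_edges_general {V : Type*} [Finite V]
    (a b c d : V) (hab : a ≠ b) (hac : a ≠ c) (had : a ≠ d)
    (hbc : b ≠ c) (hbd : b ≠ d) (hcd : c ≠ d) :
    (Nat.card {T : SimpleGraph V // T.IsTree ∧ T.Adj a b ∧ T.Adj c d} : ℚ) =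
        4 * (Nat.card V : ℚ) ^ ((Nat.card V : ℤ) - 4) ∧
      (Nat.card {T : SimpleGraph V // T.IsTree ∧ T.Adj a b ∧ T.Adj c d} : ℚ) /
          (Nat.card V : ℚ) ^ (Nat.card V - 2) = 4 / Nat.card V ^ 2 ∧
      (Nat.card {T : SimpleGraph V // T.IsTree ∧ T.Adj a b ∧ T.Adj c d} : ℚ) /
          (Nat.card V : ℚ) ^ (Nat.card V - 2) =
        ((Nat.card {T : SimpleGraph V // T.IsTree ∧ T.Adj a b} : ℚ) /
            (Nat.card V : ℚ) ^ (Nat.card V - 2)) *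
          ((Nat.card {T : SimpleGraph V // T.IsTree ∧ T.Adj c d} : ℚ) /
            (Nat.card V : ℚ) ^ (Nat.card V - 2)) := by
  have : Nontrivial V := ⟨a, b, hab⟩
  have hV : (Nat.card V : ℚ) ≠ 0 := mod_cast Nat.card_pos.ne'
  have hexp : (Nat.card V : ℤ) - 4 = (Nat.card V - 2 : ℕ) - 2 := by
    have := Finite.one_lt_card (α := V)
    omega
  rw [natCard_isTree_and_adj_and_adj hab hac had hbc hbd hcd, natCard_isTree_and_adj hab,
    natCard_isTree_and_adj hcd, hexp, zpow_sub₀ hV, zpow_natCast]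
  refine ⟨?_, ?_, ?_⟩ <;> field_simp <;> norm_num

/-- For `n ≥ 4` and two vertex-disjoint edges `{a,b}`, `{c,d}` of `K_n`,
the number of spanning trees of `K_n` containing both edges equals `4 · n^(n-4)` (read in
`ℚ`, with an integer power of `n`); equivalently, the probability that a uniformly random
spanning tree contains both edges equals `4/n² = (2/n)·(2/n)`, i.e. the events
`{e ∈ T}` and `{f ∈ T}` are independent. -/
theorem spanning_trees_containing_two_disjoint_edges (n : ℕ) (hn : 4 ≤ n)
    (a b c d : Fin n) (hab : a ≠ b) (hac : a ≠ c) (had : a ≠ d)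
    (hbc : b ≠ c) (hbd : b ≠ d) (hcd : c ≠ d) :
    (Nat.card {T : SimpleGraph (Fin n) // T.IsTree ∧ T.Adj a b ∧ T.Adj c d} : ℚ) =
        4 * (n : ℚ) ^ ((n : ℤ) - 4) ∧
      (Nat.card {T : SimpleGraph (Fin n) // T.IsTree ∧ T.Adj a b ∧ T.Adj c d} : ℚ) /
          (n : ℚ) ^ (n - 2) = 4 / n ^ 2 ∧
      (Nat.card {T : SimpleGraph (Fin n) // T.IsTree ∧ T.Adj a b ∧ T.Adj c d} : ℚ) /
          (n : ℚ) ^ (n - 2) =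
        ((Nat.card {T : SimpleGraph (Fin n) // T.IsTree ∧ T.Adj a b} : ℚ) /
            (n : ℚ) ^ (n - 2)) *
          ((Nat.card {T : SimpleGraph (Fin n) // T.IsTree ∧ T.Adj c d} : ℚ) /
            (n : ℚ) ^ (n - 2)) := by
  simpa using spanning_trees_containing_two_disjoint_edges_general a b c d hab hac had hbc hbd hcd
end

section
/- Fix a positive integer r. There exists a constant C > 0 such that for all n ≥ 2, the r-th moment of X_n satisfies |E(X_n^r) − e^{−2} Σ_{k≥0} 2^k k^r / k!| ≤ C/n. In particular, E(X_n^r) converges as n → ∞ to the r-th moment e^{−2} Σ_{k≥0} 2^k k^r / k! of a Poisson random variable with expected value 2. -/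
open Classical in
/-- The `r`-th moment `E(Xₙʳ)` of the number `Xₙ` of common edges of two spanning trees
of `K_n` chosen independently and uniformly at random: the sum of
`|E(T₁) ∩ E(T₂)|^r` over all ordered pairs of spanning trees of `K_n`, divided by the
number `n^(2(n-2))` of such pairs. -/
noncomputable def commonEdgesMoment (n r : ℕ) : ℝ :=
  (∑ p : SimpleGraph (Fin n) × SimpleGraph (Fin n),
      if p.1.IsTree ∧ p.2.IsTree then (Nat.card (p.1 ⊓ p.2).edgeSet : ℝ) ^ r else 0) /
    (n : ℝ) ^ (2 * (n - 2))

/-!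
Write `t(F)` for the number of spanning trees above a forest `F` on `n` vertices with `c`
components. Counting pairs (tree above `F`, edge of it joining two components of `F`) expresses
`t(F)` through the counts for the forests with one more edge, and induction gives
`n² t(F) = nᶜ ∏ |C|`, the product being over the components `C` of `F`.

The `k`-th factorial moment of `Xₙ` is the sum of `(t(e) / nⁿ⁻²)²` over the `k`-tuples `e` of
distinct edges of `K_n`. Since `2|C| ≤ 2 ^ |C|`, each term is at most `(2 / n) ^ (2k)`, with
equality when the edges are pairwise disjoint. There are at most `(n² / 2) ^ k` tuples, and the
matchings among them make up this bound up to a factor `1 - O(1/n)`, so the factorial moment is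
`2ᵏ + O(1/n)`, and `2ᵏ` is the `k`-th factorial moment of a Poisson variable of mean `2`. Stirling
numbers of the second kind turn factorial moments into moments on both sides.
-/

open Finset SimpleGraph

section Components

variable {V : Type*} {G : SimpleGraph V} {u v x y : V}

lemma reachable_sup_edge_iff : (G ⊔ edge u v).Reachable x y ↔
    G.Reachable x y ∨ G.Reachable x u ∧ G.Reachable v y ∨ G.Reachable x v ∧ G.Reachable u y := by
  constructor
  · rintro ⟨p⟩
    induction p with
    | nil => exact .inl .rfl
    | cons hab _ ih =>
      rw [sup_adj, edge_adj] at hab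
      rcases hab with hab | ⟨⟨rfl, rfl⟩ | ⟨rfl, rfl⟩, -⟩
      · have := hab.reachable
        exact ih.imp this.trans (Or.imp (And.imp_left this.trans) (And.imp_left this.trans))
      · exact ih.elim (fun h => .inr (.inl ⟨.rfl, h⟩)) fun ih =>
          ih.elim (fun h => .inr (.inl ⟨.rfl, h.2⟩)) fun h => .inl h.2
      · exact ih.elim (fun h => .inr (.inr ⟨.rfl, h⟩)) fun ih =>
          ih.elim (fun h => .inl h.2) fun h => .inr (.inr ⟨.rfl, h.2⟩)
  · have huv : (G ⊔ edge u v).Reachable u v := by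
      rcases eq_or_ne u v with rfl | hne
      · exact .rfl
      · exact Adj.reachable (.inr (by simp [edge_adj, hne]))
    have lift {a b : V} (h : G.Reachable a b) : (G ⊔ edge u v).Reachable a b := h.mono le_sup_left
    rintro (h | ⟨hxu, hvy⟩ | ⟨hxv, huy⟩)
    · exact lift h
    · exact (lift hxu).trans (huv.trans (lift hvy))
    · exact (lift hxv).trans (huv.symm.trans (lift huy))

lemma ne_of_not_reachable (h : ¬ G.Reachable u v) : u ≠ v := by
  rintro rfl
  exact h .rfl

/-- The map on components induced by adding the edge `uv`. -/
abbrev componentMapSupEdge (G : SimpleGraph V) (u v : V) :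
    G.ConnectedComponent → (G ⊔ edge u v).ConnectedComponent :=
  ConnectedComponent.map (Hom.ofLE le_sup_left)

lemma componentMapSupEdge_bijOn (h : ¬ G.Reachable u v) :
    Set.BijOn (componentMapSupEdge G u v) {c | c ≠ G.connectedComponentMk v} Set.univ := by
  refine ⟨Set.mapsTo_univ _ _, ?_, ?_⟩
  · refine ConnectedComponent.ind fun x hx => ConnectedComponent.ind fun y hy hxy => ?_
    simp only [Set.mem_ofPred_eq, ne_eq, ConnectedComponent.eq] at hx hy
    rcases reachable_sup_edge_iff.1 (ConnectedComponent.eq.1 hxy) with h' | ⟨-, h'⟩ | ⟨h', -⟩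
    · exact ConnectedComponent.eq.2 h'
    · exact absurd h'.symm hy
    · exact absurd h' hx
  · refine ConnectedComponent.ind fun x _ => ?_
    by_cases hx : G.Reachable x v
    · refine ⟨G.connectedComponentMk u, fun e => h (ConnectedComponent.eq.1 e), ?_⟩
      exact ConnectedComponent.eq.2 (reachable_sup_edge_iff.2 (.inr (.inl ⟨.rfl, hx.symm⟩)))
    · exact ⟨G.connectedComponentMk x, fun e => hx (ConnectedComponent.eq.1 e), rfl⟩

lemma natCard_component_sup_edge_add_one [Finite V] (h : ¬ G.Reachable u v) :
    Nat.card (G ⊔ edge u v).ConnectedComponent + 1 = Nat.card G.ConnectedComponent := by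
  rw [← Set.ncard_univ (G ⊔ edge u v).ConnectedComponent,
    ← (componentMapSupEdge_bijOn h).image_eq,
    (componentMapSupEdge_bijOn h).injOn.ncard_image,
    ← Set.ncard_add_ncard_compl {c | c ≠ G.connectedComponentMk v}]
  congr 1
  simp [Set.compl_ofPred]

lemma supp_componentMapSupEdge_left :
    (componentMapSupEdge G u v (G.connectedComponentMk u)).supp =
      (G.connectedComponentMk u).supp ∪ (G.connectedComponentMk v).supp := by
  ext x
  simp only [ConnectedComponent.mem_supp_iff, ConnectedComponent.map_mk, ConnectedComponent.eq,
    Hom.ofLE_apply, reachable_sup_edge_iff, Set.mem_union, Reachable.refl, and_true]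
  have : G.Reachable x u ∧ G.Reachable v u → G.Reachable x u := And.left
  tauto

lemma supp_componentMapSupEdge_of_ne {c : G.ConnectedComponent}
    (hu : c ≠ G.connectedComponentMk u) (hv : c ≠ G.connectedComponentMk v) :
    (componentMapSupEdge G u v c).supp = c.supp := by
  induction c using ConnectedComponent.ind
  ext x
  rw [ne_eq, ConnectedComponent.eq, reachable_comm] at hu hv
  simp [ConnectedComponent.mem_supp_iff, ConnectedComponent.map_mk, ConnectedComponent.eq,
    reachable_sup_edge_iff, hu, hv]

/-- The product `∏ |C|` over the connected components `C` of `G`, with the junk value `1` when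
infinitely many components have more than one vertex. -/
noncomputable def componentSizeProd (G : SimpleGraph V) : ℕ :=
  ∏ᶠ c : G.ConnectedComponent, c.supp.ncard

lemma ncard_supp_pos [Finite V] (c : G.ConnectedComponent) : 0 < c.supp.ncard :=
  (Set.ncard_pos).2 c.nonempty_supp

lemma componentSizeProd_sup_edge [Finite V] (h : ¬ G.Reachable u v) :
    componentSizeProd (G ⊔ edge u v) *
        ((G.connectedComponentMk u).supp.ncard * (G.connectedComponentMk v).supp.ncard) =
      componentSizeProd G *
        ((G.connectedComponentMk u).supp.ncard + (G.connectedComponentMk v).supp.ncard) := by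
  classical
  have := Fintype.ofFinite G.ConnectedComponent
  set Cu := G.connectedComponentMk u
  set Cv := G.connectedComponentMk v
  have hne : Cu ≠ Cv := fun e => h (ConnectedComponent.eq.1 e)
  have hmerged : (componentMapSupEdge G u v Cu).supp.ncard = Cu.supp.ncard + Cv.supp.ncard := by
    rw [supp_componentMapSupEdge_left, Set.ncard_union_eq]
    exact G.pairwise_disjoint_supp_connectedComponent hne
  have hrest : ∏ c ∈ (univ.erase Cv).erase Cu, (componentMapSupEdge G u v c).supp.ncard =
      ∏ c ∈ (univ.erase Cv).erase Cu, c.supp.ncard :=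
    prod_congr rfl fun c hc => by
      rw [supp_componentMapSupEdge_of_ne (mem_erase.1 hc).1
        (mem_erase.1 (mem_erase.1 hc).2).1]
  have hsup : componentSizeProd (G ⊔ edge u v) =
      (Cu.supp.ncard + Cv.supp.ncard) * ∏ c ∈ (univ.erase Cv).erase Cu, c.supp.ncard := by
    rw [componentSizeProd, ← finprod_mem_univ,
      ← finprod_mem_eq_of_bijOn (componentMapSupEdge G u v) (componentMapSupEdge_bijOn h)
        (fun _ _ => rfl),
      show {c | c ≠ Cv} = (univ.erase Cv : Finset G.ConnectedComponent) by ext; simp,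
      finprod_mem_coe_finset,
      ← mul_prod_erase _ _ (mem_erase.2 ⟨hne, mem_univ Cu⟩), hmerged, hrest]
  rw [hsup, componentSizeProd, finprod_eq_prod_of_fintype, ← mul_prod_erase _ _ (mem_univ Cv),
    ← mul_prod_erase _ _ (mem_erase.2 ⟨hne, mem_univ Cu⟩)]
  ring

lemma card_filter_connectedComponentMk [Fintype V] (c : G.ConnectedComponent)
    [DecidablePred fun w => G.connectedComponentMk w = c] :
    #{w | G.connectedComponentMk w = c} = c.supp.ncard := by
  rw [← Set.ncard_coe_finset]
  congr 1
  ext; simp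

lemma sum_ncard_supp [Fintype V] [Fintype G.ConnectedComponent] :
    ∑ c : G.ConnectedComponent, c.supp.ncard = Fintype.card V := by
  classical
  rw [← card_univ, card_eq_sum_card_fiberwise (f := G.connectedComponentMk) (t := univ) (by simp)]
  exact sum_congr rfl fun c _ => (card_filter_connectedComponentMk c).symm

lemma sum_inv_ncard_supp [Fintype V] :
    ∑ w, ((G.connectedComponentMk w).supp.ncard : ℝ)⁻¹ = Nat.card G.ConnectedComponent := by
  classical
  have hfiber (c : G.ConnectedComponent) :
      ∑ w with G.connectedComponentMk w = c, ((G.connectedComponentMk w).supp.ncard : ℝ)⁻¹ = 1 := by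
    rw [sum_congr rfl fun w hw => by rw [(mem_filter.1 hw).2], sum_const, nsmul_eq_mul,
      card_filter_connectedComponentMk]
    exact mul_inv_cancel₀ (by exact_mod_cast (ncard_supp_pos c).ne')
  rw [← sum_fiberwise_of_maps_to (t := univ) (g := G.connectedComponentMk) (by simp)]
  simp [hfiber, Nat.card_eq_fintype_card]

end Components

section SpanningTrees

variable {V : Type*} {F T : SimpleGraph V}

@[elab_as_elim]
theorem forest_induction [Finite V] {P : SimpleGraph V → Prop}
    (tree : ∀ T : SimpleGraph V, T.IsTree → P T)
    (join : ∀ F : SimpleGraph V, F.IsAcyclic → ¬ F.Connected →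
      (∀ u v, ¬ F.Reachable u v → P (F ⊔ edge u v)) → P F)
    (hF : F.IsAcyclic) : P F := by
  induction F using WellFoundedGT.induction with
  | ind F ih =>
    by_cases hconn : F.Connected
    · exact tree F ⟨hconn, hF⟩
    · refine join F hF hconn fun u v huv => ih _ ?_ (hF.sup_edge_of_not_reachable huv)
      exact lt_sup_edge F u v (ne_of_not_reachable huv) (mt Adj.reachable huv)

lemma natCard_component_eq_one_of_connected (h : F.Connected) :
    Nat.card F.ConnectedComponent = 1 := by
  have := h.preconnected.subsingleton_connectedComponent
  have := h.nonempty
  exact Nat.card_unique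

lemma one_lt_natCard_component_of_not_connected [Finite V] [Nonempty V] (h : ¬ F.Connected) :
    1 < Nat.card F.ConnectedComponent := by
  rw [Finite.one_lt_card_iff_nontrivial, ← not_subsingleton_iff_nontrivial]
  exact fun hs => h ⟨fun u v => ConnectedComponent.eq.1 (hs.elim _ _)⟩

lemma natCard_edgeSet_add_natCard_component [Finite V] (hF : F.IsAcyclic) :
    Nat.card F.edgeSet + Nat.card F.ConnectedComponent = Nat.card V := by
  classical
  have := Fintype.ofFinite V
  rcases isEmpty_or_nonempty V with hV | hV
  · have : IsEmpty F.ConnectedComponent := ⟨ConnectedComponent.ind hV.elim⟩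
    simp
  refine forest_induction (fun T hT => ?_) (fun F _ hconn ih => ?_) hF
  · rw [natCard_component_eq_one_of_connected hT.connected, Nat.card_eq_fintype_card,
      ← edgeFinset_card, hT.card_edgeFinset, Nat.card_eq_fintype_card]
  · obtain ⟨u, v, huv⟩ : ∃ u v, ¬ F.Reachable u v := by
      by_contra! h
      exact hconn ⟨h⟩
    have hedge := card_edgeFinset_sup_edge F (mt Adj.reachable huv) (ne_of_not_reachable huv)
    rw [edgeFinset_card, edgeFinset_card, ← Nat.card_eq_fintype_card,
      ← Nat.card_eq_fintype_card] at hedge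
    rw [← ih u v huv, hedge, ← natCard_component_sup_edge_add_one huv]
    ring

lemma not_reachable_of_adj_of_not_adj (hT : T.IsAcyclic) (hFT : F ≤ T) {u v : V}
    (hadj : T.Adj u v) (hnadj : ¬ F.Adj u v) : ¬ F.Reachable u v := by
  intro hreach
  have hacyclic : (F ⊔ edge u v).IsAcyclic :=
    hT.anti (sup_le hFT ((edge_le_iff _).2 (.inr hadj)))
  exact ((isAcyclic_sup_fromEdgeSet_iff.1 hacyclic).2 hreach).elim hadj.ne hnadj

variable [Fintype V]

open scoped Classical in
/-- The spanning trees of the complete graph on `V` which contain all edges of `F`. -/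
noncomputable def spanningTreesAbove (F : SimpleGraph V) : Finset (SimpleGraph V) :=
  {T | T.IsTree ∧ F ≤ T}

lemma mem_spanningTreesAbove : T ∈ spanningTreesAbove F ↔ T.IsTree ∧ F ≤ T := by
  simp [spanningTreesAbove]

lemma spanningTreesAbove_eq_singleton (hF : F.IsTree) : spanningTreesAbove F = {F} := by
  ext T
  rw [mem_spanningTreesAbove, mem_singleton]
  constructor
  · rintro ⟨hT, hFT⟩
    exact ((isTree_iff_minimal_connected.1 hT).eq_of_le hF.connected hFT).symm
  · rintro rfl
    exact ⟨hF, le_rfl⟩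

lemma spanningTreesAbove_eq_empty (hF : ¬ F.IsAcyclic) : spanningTreesAbove F = ∅ :=
  eq_empty_of_forall_notMem fun _ hT =>
    hF ((mem_spanningTreesAbove.1 hT).1.isAcyclic.anti (mem_spanningTreesAbove.1 hT).2)

lemma mem_spanningTreesAbove_sup_edge {u v : V} (huv : ¬ F.Reachable u v) :
    T ∈ spanningTreesAbove (F ⊔ edge u v) ↔ T ∈ spanningTreesAbove F ∧ T.Adj u v := by
  simp [mem_spanningTreesAbove, ne_of_not_reachable huv, and_assoc]

open scoped Classical in
lemma card_adj_not_reachable (hT : T ∈ spanningTreesAbove F) :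
    #{p : V × V | ¬ F.Reachable p.1 p.2 ∧ T.Adj p.1 p.2} + 2 =
      2 * Nat.card F.ConnectedComponent := by
  obtain ⟨hT, hFT⟩ := mem_spanningTreesAbove.1 hT
  have := hT.connected.nonempty
  have hsplit : #{p : V × V | T.Adj p.1 p.2} = #{p : V × V | F.Adj p.1 p.2} +
      #{p : V × V | ¬ F.Reachable p.1 p.2 ∧ T.Adj p.1 p.2} := by
    rw [← card_union_of_disjoint]
    · congr 1
      ext ⟨u, v⟩
      have := @hFT u v
      have := not_reachable_of_adj_of_not_adj hT.isAcyclic hFT (u := u) (v := v)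
      simp only [mem_filter, mem_univ, true_and, mem_union]
      tauto
    · exact disjoint_filter.2 fun p _ hadj h => h.1 hadj.reachable
  have hedges := natCard_edgeSet_add_natCard_component (hT.isAcyclic.anti hFT)
  have hedgesT := hT.card_edgeFinset
  rw [Nat.card_eq_fintype_card, ← edgeFinset_card, Nat.card_eq_fintype_card (α := V)] at hedges
  have hpairsT : 2 * #T.edgeFinset = #{p : V × V | T.Adj p.1 p.2} := two_mul_card_edgeFinset T
  have hpairsF : 2 * #F.edgeFinset = #{p : V × V | F.Adj p.1 p.2} := two_mul_card_edgeFinset F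
  omega

open scoped Classical in
lemma card_spanningTreesAbove_double_count (F : SimpleGraph V) :
    (#(spanningTreesAbove F) : ℝ) * (2 * (Nat.card F.ConnectedComponent - 1)) =
      ∑ p : V × V with ¬ F.Reachable p.1 p.2, (#(spanningTreesAbove (F ⊔ edge p.1 p.2)) : ℝ) := by
  have hfiber (T : SimpleGraph V) (hT : T ∈ spanningTreesAbove F) :
      (#{p ∈ ({p | ¬ F.Reachable p.1 p.2} : Finset (V × V)) | T.Adj p.1 p.2} : ℝ) =
        2 * (Nat.card F.ConnectedComponent - 1) := by
    have : (_ : ℝ) = _ := congrArg Nat.cast (card_adj_not_reachable hT)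
    push_cast at this
    rw [filter_filter]
    linarith
  rw [← nsmul_eq_mul, ← sum_const, ← sum_congr rfl hfiber, ← Nat.cast_sum]
  refine (congrArg Nat.cast (sum_card_bipartiteAbove_eq_sum_card_bipartiteBelow
    fun (T : SimpleGraph V) (p : V × V) => T.Adj p.1 p.2)).trans ?_
  rw [Nat.cast_sum]
  refine sum_congr rfl fun p hp => congrArg (fun s => (#s : ℝ)) ?_
  ext T
  rw [mem_spanningTreesAbove_sup_edge (mem_filter.1 hp).2, bipartiteBelow, mem_filter]

open scoped Classical in
lemma sum_not_reachable_inv_ncard_supp (F : SimpleGraph V) :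
    ∑ p : V × V with ¬ F.Reachable p.1 p.2, ((F.connectedComponentMk p.1).supp.ncard : ℝ)⁻¹ =
      Fintype.card V * (Nat.card F.ConnectedComponent - 1) := by
  have hrow (u : V) :
      ∑ v with ¬ F.Reachable u v, ((F.connectedComponentMk u).supp.ncard : ℝ)⁻¹ =
        Fintype.card V * ((F.connectedComponentMk u).supp.ncard : ℝ)⁻¹ - 1 := by
    have hcard : (#{v | F.Reachable u v} : ℝ) = (F.connectedComponentMk u).supp.ncard := by
      rw [← card_filter_connectedComponentMk]
      simp [reachable_comm]
    have hcompl : (#{v | F.Reachable u v} : ℝ) + #{v | ¬ F.Reachable u v} = Fintype.card V := by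
      exact_mod_cast card_filter_add_card_filter_not (F.Reachable u)
    have hpos : ((F.connectedComponentMk u).supp.ncard : ℝ) ≠ 0 :=
      Nat.cast_ne_zero.2 (ncard_supp_pos _).ne'
    rw [sum_const, nsmul_eq_mul, ← hcompl, hcard]
    field_simp
    ring
  rw [← univ_product_univ, sum_filter, sum_product]
  simp only [← sum_filter, hrow]
  rw [sum_sub_distrib, ← mul_sum, sum_inv_ncard_supp]
  simp
  ring

open scoped Classical in
lemma sum_componentSizeProd_sup_edge (F : SimpleGraph V) :
    ∑ p : V × V with ¬ F.Reachable p.1 p.2, (componentSizeProd (F ⊔ edge p.1 p.2) : ℝ) =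
      componentSizeProd F * (2 * Fintype.card V * (Nat.card F.ConnectedComponent - 1)) := by
  have hjoin (p : V × V) (hp : p ∈ univ.filter fun p : V × V => ¬ F.Reachable p.1 p.2) :
      (componentSizeProd (F ⊔ edge p.1 p.2) : ℝ) = componentSizeProd F *
        (((F.connectedComponentMk p.1).supp.ncard : ℝ)⁻¹ +
          ((F.connectedComponentMk p.2).supp.ncard : ℝ)⁻¹) := by
    have hpos (w : V) : ((F.connectedComponentMk w).supp.ncard : ℝ) ≠ 0 :=
      Nat.cast_ne_zero.2 (ncard_supp_pos _).ne'
    have := componentSizeProd_sup_edge (mem_filter.1 hp).2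
    field_simp [hpos p.1, hpos p.2]
    exact_mod_cast (by linarith)
  have hswap : ∑ p : V × V with ¬ F.Reachable p.1 p.2,
        ((F.connectedComponentMk p.2).supp.ncard : ℝ)⁻¹ =
      ∑ p : V × V with ¬ F.Reachable p.1 p.2,
        ((F.connectedComponentMk p.1).supp.ncard : ℝ)⁻¹ :=
    sum_equiv (Equiv.prodComm V V) (by simp [reachable_comm]) (by simp)
  rw [sum_congr rfl hjoin, ← mul_sum, sum_add_distrib, hswap, sum_not_reachable_inv_ncard_supp]
  ring

lemma componentSizeProd_of_connected (h : F.Connected) :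
    componentSizeProd F = Fintype.card V := by
  classical
  have := h.preconnected.subsingleton_connectedComponent
  have := h.nonempty
  obtain ⟨_⟩ := nonempty_unique F.ConnectedComponent
  rw [componentSizeProd, finprod_unique, ← sum_ncard_supp (G := F), Fintype.sum_unique]

theorem sq_card_mul_card_spanningTreesAbove [Nonempty V] (hF : F.IsAcyclic) :
    Fintype.card V ^ 2 * #(spanningTreesAbove F) =
      Fintype.card V ^ Nat.card F.ConnectedComponent * componentSizeProd F := by
  classical
  refine forest_induction (fun T hT => ?_) (fun F _ hconn ih => ?_) hF
  · rw [spanningTreesAbove_eq_singleton hT, natCard_component_eq_one_of_connected hT.connected]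
    simp [componentSizeProd_of_connected hT.connected, sq]
  · have hc := one_lt_natCard_component_of_not_connected hconn
    have hstep : (Fintype.card V : ℝ) ^ 2 *
          ∑ p : V × V with ¬ F.Reachable p.1 p.2, (#(spanningTreesAbove (F ⊔ edge p.1 p.2)) : ℝ) =
        (Fintype.card V : ℝ) ^ (Nat.card F.ConnectedComponent - 1) *
          ∑ p : V × V with ¬ F.Reachable p.1 p.2, (componentSizeProd (F ⊔ edge p.1 p.2) : ℝ) := by
      rw [mul_sum, mul_sum]
      refine sum_congr rfl fun p hp => ?_
      rw [← natCard_component_sup_edge_add_one (mem_filter.1 hp).2, Nat.add_sub_cancel]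
      exact_mod_cast ih _ _ (mem_filter.1 hp).2
    rw [← card_spanningTreesAbove_double_count, sum_componentSizeProd_sup_edge] at hstep
    have hpos : 2 * ((Nat.card F.ConnectedComponent : ℝ) - 1) ≠ 0 := by
      have : (1 : ℝ) < Nat.card F.ConnectedComponent := by exact_mod_cast hc
      exact mul_ne_zero two_ne_zero (sub_pos.2 this).ne'
    have hpow : (Fintype.card V : ℝ) ^ Nat.card F.ConnectedComponent =
        (Fintype.card V : ℝ) ^ (Nat.card F.ConnectedComponent - 1) * Fintype.card V :=
      (pow_sub_one_mul (by omega) _).symm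
    have hreal : (Fintype.card V : ℝ) ^ 2 * #(spanningTreesAbove F) =
        (Fintype.card V : ℝ) ^ Nat.card F.ConnectedComponent * componentSizeProd F := by
      refine mul_right_cancel₀ hpos ?_
      rw [hpow]
      linear_combination hstep
    exact_mod_cast hreal

end SpanningTrees

section ComponentSizes

variable {V : Type*} {G F : SimpleGraph V}

/-- A graph whose edges form a matching, i.e. are pairwise disjoint. -/
def IsMatchingGraph (G : SimpleGraph V) : Prop :=
  ∀ ⦃u v w⦄, G.Adj u v → G.Adj u w → v = w

lemma IsMatchingGraph.adj_of_reachable (hG : IsMatchingGraph G) {u v : V} (hne : u ≠ v)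
    (h : G.Reachable u v) : G.Adj u v := by
  obtain ⟨p⟩ := h
  induction p with
  | nil => exact absurd rfl hne
  | @cons u w v huw _ ih =>
    by_cases hwv : w = v
    · exact hwv ▸ huw
    · exact absurd (hG huw.symm (ih hwv)) hne

lemma IsMatchingGraph.isAcyclic (hG : IsMatchingGraph G) : G.IsAcyclic := by
  refine isAcyclic_iff_forall_adj_isBridge.2 fun u v huv => isBridge_iff.2 ?_
  rintro ⟨_ | ⟨huw, -⟩⟩
  · exact huv.ne rfl
  · rw [deleteEdges_adj] at huw
    exact huw.2 (by rw [hG huv huw.1]; rfl)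

lemma IsMatchingGraph.ncard_supp_le_two [Finite V] (hG : IsMatchingGraph G)
    (c : G.ConnectedComponent) : c.supp.ncard ≤ 2 := by
  by_contra! h
  obtain ⟨a, ha, b, hb, d, hd, hab, had, hbd⟩ := (Set.two_lt_ncard (Set.toFinite _)).1 h
  exact hbd (hG (hG.adj_of_reachable hab (c.reachable_of_mem_supp ha hb))
    (hG.adj_of_reachable had (c.reachable_of_mem_supp ha hd)))

lemma two_mul_le_two_pow (m : ℕ) : 2 * m ≤ 2 ^ m := by
  cases m with
  | zero => simp
  | succ m => exact (pow_succ' 2 m) ▸ Nat.mul_le_mul_left 2 Nat.lt_two_pow_self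

lemma componentSizeProd_mul_two_pow [Fintype G.ConnectedComponent] :
    2 ^ Nat.card G.ConnectedComponent * componentSizeProd G =
      ∏ c : G.ConnectedComponent, 2 * c.supp.ncard := by
  simp [componentSizeProd, finprod_eq_prod_of_fintype, prod_mul_distrib, Nat.card_eq_fintype_card]

variable [Finite V]

lemma two_pow_natCard_edgeSet_mul (hF : F.IsAcyclic) [Fintype F.ConnectedComponent] :
    2 ^ Nat.card F.ConnectedComponent * 2 ^ Nat.card F.edgeSet =
      ∏ c : F.ConnectedComponent, 2 ^ c.supp.ncard := by
  have := Fintype.ofFinite V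
  rw [prod_pow_eq_pow_sum, sum_ncard_supp, ← pow_add, add_comm,
    natCard_edgeSet_add_natCard_component hF, Nat.card_eq_fintype_card]

lemma componentSizeProd_le_two_pow (hF : F.IsAcyclic) :
    componentSizeProd F ≤ 2 ^ Nat.card F.edgeSet := by
  have := Fintype.ofFinite F.ConnectedComponent
  refine Nat.le_of_mul_le_mul_left ?_ (pow_pos two_pos (Nat.card F.ConnectedComponent))
  rw [componentSizeProd_mul_two_pow, two_pow_natCard_edgeSet_mul hF]
  exact prod_le_prod' fun c _ => two_mul_le_two_pow _

lemma IsMatchingGraph.componentSizeProd_eq_two_pow (hG : IsMatchingGraph G) :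
    componentSizeProd G = 2 ^ Nat.card G.edgeSet := by
  have := Fintype.ofFinite G.ConnectedComponent
  refine Nat.eq_of_mul_eq_mul_left (pow_pos two_pos (Nat.card G.ConnectedComponent)) ?_
  rw [componentSizeProd_mul_two_pow, two_pow_natCard_edgeSet_mul hG.isAcyclic]
  refine prod_congr rfl fun c _ => ?_
  have hpos := ncard_supp_pos c
  have hle := hG.ncard_supp_le_two c
  interval_cases c.supp.ncard <;> rfl

end ComponentSizes

section SpanningTreeBounds

variable {V : Type*} [Fintype V] [Nonempty V] {F : SimpleGraph V}

lemma card_spanningTreesAbove_of_isAcyclic (hF : F.IsAcyclic) :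
    (#(spanningTreesAbove F) : ℝ) = (Fintype.card V : ℝ) ^ (Fintype.card V - 2) *
      (componentSizeProd F / (Fintype.card V : ℝ) ^ Nat.card F.edgeSet) := by
  have hn : (Fintype.card V : ℝ) ≠ 0 := Nat.cast_ne_zero.2 Fintype.card_ne_zero
  have hpow : (Fintype.card V : ℝ) ^ 2 * (Fintype.card V : ℝ) ^ (Fintype.card V - 2) =
      (Fintype.card V : ℝ) ^ Nat.card F.ConnectedComponent *
        (Fintype.card V : ℝ) ^ Nat.card F.edgeSet := by
    rw [← pow_add (_ : ℝ) (Nat.card F.ConnectedComponent), add_comm,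
      natCard_edgeSet_add_natCard_component hF, Nat.card_eq_fintype_card, ← pow_add]
    rcases (Fintype.card_pos (α := V)).nat_succ_le.eq_or_lt with h | h
    · simp [← h]
    · rw [Nat.add_sub_cancel' h]
  have hcount : (Fintype.card V : ℝ) ^ 2 * #(spanningTreesAbove F) =
      (Fintype.card V : ℝ) ^ Nat.card F.ConnectedComponent * componentSizeProd F := by
    exact_mod_cast sq_card_mul_card_spanningTreesAbove hF
  field_simp
  refine mul_left_cancel₀ (pow_ne_zero 2 hn) ?_
  linear_combination (Fintype.card V : ℝ) ^ Nat.card F.edgeSet * hcount - componentSizeProd F * hpow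

lemma card_spanningTreesAbove_le (F : SimpleGraph V) :
    (#(spanningTreesAbove F) : ℝ) ≤
      (Fintype.card V : ℝ) ^ (Fintype.card V - 2) * (2 / Fintype.card V) ^ Nat.card F.edgeSet := by
  by_cases hF : F.IsAcyclic
  · rw [card_spanningTreesAbove_of_isAcyclic hF, div_pow]
    gcongr
    exact_mod_cast componentSizeProd_le_two_pow hF
  · rw [spanningTreesAbove_eq_empty hF, card_empty, Nat.cast_zero]
    positivity

lemma IsMatchingGraph.card_spanningTreesAbove (hF : IsMatchingGraph F) :
    (#(spanningTreesAbove F) : ℝ) =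
      (Fintype.card V : ℝ) ^ (Fintype.card V - 2) * (2 / Fintype.card V) ^ Nat.card F.edgeSet := by
  rw [card_spanningTreesAbove_of_isAcyclic hF.isAcyclic, hF.componentSizeProd_eq_two_pow, div_pow]
  push_cast
  rfl

end SpanningTreeBounds

section EdgeTuples

variable {V : Type*} {k : ℕ}

/-- The graph on `V` whose edges are the members of a tuple of distinct edges of the complete
graph. -/
def edgeTupleGraph (e : Fin k ↪ (⊤ : SimpleGraph V).edgeSet) : SimpleGraph V :=
  fromEdgeSet (Set.range fun i => (e i : Sym2 V))

lemma edgeSet_edgeTupleGraph (e : Fin k ↪ (⊤ : SimpleGraph V).edgeSet) :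
    (edgeTupleGraph e).edgeSet = Set.range fun i => (e i : Sym2 V) := by
  rw [edgeTupleGraph, edgeSet_fromEdgeSet, sdiff_eq_left, Set.disjoint_left]
  rintro _ ⟨i, rfl⟩
  exact not_isDiag_of_mem_edgeSet _ (e i).2

lemma natCard_edgeSet_edgeTupleGraph (e : Fin k ↪ (⊤ : SimpleGraph V).edgeSet) :
    Nat.card (edgeTupleGraph e).edgeSet = k := by
  have hinj : Function.Injective fun i => (e i : Sym2 V) :=
    Subtype.val_injective.comp e.injective
  rw [edgeSet_edgeTupleGraph, Nat.card_range_of_injective hinj, Nat.card_fin]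

lemma edgeTupleGraph_le_iff {e : Fin k ↪ (⊤ : SimpleGraph V).edgeSet} {G : SimpleGraph V} :
    edgeTupleGraph e ≤ G ↔ ∀ i, (e i : Sym2 V) ∈ G.edgeSet := by
  rw [← edgeSet_subset_edgeSet, edgeSet_edgeTupleGraph, Set.range_subset_iff]

/-- A tuple of edges contained in `G` is a tuple of edges of `G`. -/
def edgeTupleEquiv (G : SimpleGraph V) (k : ℕ) :
    {e : Fin k ↪ (⊤ : SimpleGraph V).edgeSet // edgeTupleGraph e ≤ G} ≃ (Fin k ↪ G.edgeSet) where
  toFun e := ⟨fun i => ⟨e.1 i, edgeTupleGraph_le_iff.1 e.2 i⟩, fun _ _ hij =>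
    e.1.injective (Subtype.ext (Subtype.mk.inj hij))⟩
  invFun f := ⟨f.trans (Set.embeddingOfSubset _ _ (edgeSet_mono le_top)),
    edgeTupleGraph_le_iff.2 fun i => (f i).2⟩
  left_inv _ := rfl
  right_inv _ := rfl

variable [Fintype V]

open scoped Classical in
lemma card_edgeTupleGraph_le (G : SimpleGraph V) (k : ℕ) :
    #{e : Fin k ↪ (⊤ : SimpleGraph V).edgeSet | edgeTupleGraph e ≤ G} =
      (Nat.card G.edgeSet).descFactorial k := by
  rw [← Fintype.card_subtype, Fintype.card_congr (edgeTupleEquiv G k), Fintype.card_embedding_eq,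
    Fintype.card_fin, Nat.card_eq_fintype_card]

open scoped Classical in
lemma card_edgeTuple_le (V : Type*) [Fintype V] (k : ℕ) :
    (Fintype.card (Fin k ↪ (⊤ : SimpleGraph V).edgeSet) : ℝ) ≤
      ((Fintype.card V : ℝ) ^ 2 / 2) ^ k := by
  rw [Fintype.card_embedding_eq, Fintype.card_fin, ← edgeFinset_card,
    card_edgeFinset_top_eq_card_choose_two]
  calc (((Fintype.card V).choose 2).descFactorial k : ℝ) ≤ ((Fintype.card V).choose 2 : ℝ) ^ k := by
        exact_mod_cast Nat.descFactorial_le_pow _ k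
    _ ≤ ((Fintype.card V : ℝ) ^ 2 / 2) ^ k := by
        gcongr
        simpa using Nat.choose_le_pow_div (α := ℝ) 2 (Fintype.card V)

open scoped Classical in
theorem sum_descFactorial_card_inf_edgeSet (V : Type*) [Fintype V] (k : ℕ) :
    ∑ p : SimpleGraph V × SimpleGraph V with p.1.IsTree ∧ p.2.IsTree,
        (Nat.card (p.1 ⊓ p.2).edgeSet).descFactorial k =
      ∑ e : Fin k ↪ (⊤ : SimpleGraph V).edgeSet, #(spanningTreesAbove (edgeTupleGraph e)) ^ 2 := by
  simp_rw [← card_edgeTupleGraph_le]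
  refine (sum_card_bipartiteAbove_eq_sum_card_bipartiteBelow
    fun (p : SimpleGraph V × SimpleGraph V) (e : Fin k ↪ (⊤ : SimpleGraph V).edgeSet) =>
      edgeTupleGraph e ≤ p.1 ⊓ p.2).trans (sum_congr rfl fun e _ => ?_)
  rw [sq, ← card_product]
  congr 1
  ext p
  simp only [bipartiteBelow, mem_filter, mem_univ, true_and, le_inf_iff, mem_product,
    mem_spanningTreesAbove]
  tauto

end EdgeTuples

section Matchings

variable {V : Type*} {k : ℕ}

/-- The edges `{g (i, true), g (i, false)}` pairing up the entries of a tuple of `2k` distinct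
vertices. -/
@[simps]
def pairingEdges (g : Fin k × Bool ↪ V) : Fin k ↪ (⊤ : SimpleGraph V).edgeSet where
  toFun i := ⟨s(g (i, true), g (i, false)), by simp⟩
  inj' i j hij := by
    simpa using congrArg Subtype.val hij

lemma edgeTupleGraph_pairingEdges_adj {g : Fin k × Bool ↪ V} {u v : V} :
    (edgeTupleGraph (pairingEdges g)).Adj u v ↔ ∃ i b, g (i, b) = u ∧ g (i, !b) = v := by
  simp [← mem_edgeSet, edgeSet_edgeTupleGraph, and_comm, or_comm]

lemma isMatchingGraph_pairingEdges (g : Fin k × Bool ↪ V) :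
    IsMatchingGraph (edgeTupleGraph (pairingEdges g)) := by
  intro u v w huv huw
  obtain ⟨i, b, rfl, rfl⟩ := edgeTupleGraph_pairingEdges_adj.1 huv
  obtain ⟨j, c, hu, rfl⟩ := edgeTupleGraph_pairingEdges_adj.1 huw
  obtain ⟨rfl, rfl⟩ := Prod.mk.inj (g.injective hu)
  rfl

variable [Fintype V]

open scoped Classical in
lemma card_fiber_pairingEdges_le (e : Fin k ↪ (⊤ : SimpleGraph V).edgeSet) :
    #{g : Fin k × Bool ↪ V | pairingEdges g = e} ≤ 2 ^ k := by
  have hcard : #(Fintype.piFinset fun i => (e i : Sym2 V).toFinset) = 2 ^ k := by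
    rw [Fintype.card_piFinset]
    simp [Sym2.card_toFinset, not_isDiag_of_mem_edgeSet _ (e _).2]
  rw [← hcard]
  refine card_le_card_of_injOn (fun g i => g (i, true)) ?_ ?_
  · intro g hg
    obtain rfl := (mem_filter.1 hg).2
    simp
  · intro g hg g' hg' htrue
    obtain rfl := (mem_filter.1 hg).2
    ext ⟨i, b⟩
    have htrue : g (i, true) = g' (i, true) := congrFun htrue i
    have hedge : s(g' (i, true), g' (i, false)) = s(g (i, true), g (i, false)) :=
      congrArg (fun e => (e i : Sym2 V)) (mem_filter.1 hg').2
    cases b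
    · exact (Sym2.congr_right.1 (htrue ▸ hedge)).symm
    · exact htrue

open scoped Classical in
lemma descFactorial_le_two_pow_mul_card_isMatchingGraph (V : Type*) [Fintype V] (k : ℕ) :
    (Fintype.card V).descFactorial (2 * k) ≤ 2 ^ k *
      #{e : Fin k ↪ (⊤ : SimpleGraph V).edgeSet | IsMatchingGraph (edgeTupleGraph e)} := by
  calc (Fintype.card V).descFactorial (2 * k) = #(univ : Finset (Fin k × Bool ↪ V)) := by
        rw [card_univ, Fintype.card_embedding_eq]
        simp [mul_comm]
    _ ≤ 2 ^ k * #(univ.image (pairingEdges (V := V) (k := k))) :=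
        card_le_mul_card_image _ _ fun e _ => card_fiber_pairingEdges_le e
    _ ≤ _ := by
        gcongr
        exact image_subset_iff.2 fun g _ =>
          mem_filter.2 ⟨mem_univ _, isMatchingGraph_pairingEdges g⟩

end Matchings

section FactorialMoments

open scoped Classical in
/-- The factorial moment `E(X(X-1)⋯(X-k+1))` of the number `X` of common edges of two independent
uniformly random spanning trees of the complete graph on `V`, with the normalisation of
`commonEdgesMoment`. -/
noncomputable def commonEdgesFactorialMoment (V : Type*) [Fintype V] (k : ℕ) : ℝ :=
  (∑ p : SimpleGraph V × SimpleGraph V with p.1.IsTree ∧ p.2.IsTree,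
      ((Nat.card (p.1 ⊓ p.2).edgeSet).descFactorial k : ℝ)) /
    (Fintype.card V : ℝ) ^ (2 * (Fintype.card V - 2))

open scoped Classical in
lemma commonEdgesFactorialMoment_eq_sum (V : Type*) [Fintype V] (k : ℕ) :
    commonEdgesFactorialMoment V k = ∑ e : Fin k ↪ (⊤ : SimpleGraph V).edgeSet,
      (#(spanningTreesAbove (edgeTupleGraph e)) /
        (Fintype.card V : ℝ) ^ (Fintype.card V - 2)) ^ 2 := by
  simp_rw [div_pow, ← sum_div, ← pow_mul']
  rw [commonEdgesFactorialMoment]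
  congr 1
  exact_mod_cast sum_descFactorial_card_inf_edgeSet V k

variable (V : Type*) [Fintype V] [Nonempty V] (k : ℕ)

lemma commonEdgesFactorialMoment_le : commonEdgesFactorialMoment V k ≤ 2 ^ k := by
  classical
  have : (0 : ℝ) < Fintype.card V := Nat.cast_pos.2 Fintype.card_pos
  have hterm (e : Fin k ↪ (⊤ : SimpleGraph V).edgeSet) :
      (#(spanningTreesAbove (edgeTupleGraph e)) : ℝ) / (Fintype.card V : ℝ) ^ (Fintype.card V - 2) ≤
        (2 / Fintype.card V) ^ k := by
    rw [div_le_iff₀' (by positivity)]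
    simpa only [natCard_edgeSet_edgeTupleGraph] using
      card_spanningTreesAbove_le (edgeTupleGraph e)
  calc commonEdgesFactorialMoment V k
      ≤ ∑ _e : Fin k ↪ (⊤ : SimpleGraph V).edgeSet, (((2 : ℝ) / Fintype.card V) ^ k) ^ 2 := by
        rw [commonEdgesFactorialMoment_eq_sum]
        gcongr with e
        exact hterm e
    _ ≤ ((Fintype.card V : ℝ) ^ 2 / 2) ^ k * (((2 : ℝ) / Fintype.card V) ^ k) ^ 2 := by
        rw [sum_const, nsmul_eq_mul, card_univ]
        gcongr
        exact card_edgeTuple_le V k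
    _ = 2 ^ k := by
        rw [pow_right_comm, ← mul_pow]
        congr 1
        field_simp

lemma le_commonEdgesFactorialMoment :
    2 ^ k * ((Fintype.card V).descFactorial (2 * k) / (Fintype.card V : ℝ) ^ (2 * k)) ≤
      commonEdgesFactorialMoment V k := by
  classical
  have : (0 : ℝ) < Fintype.card V := Nat.cast_pos.2 Fintype.card_pos
  have hterm (e : Fin k ↪ (⊤ : SimpleGraph V).edgeSet)
      (he : e ∈ ({e | IsMatchingGraph (edgeTupleGraph e)} : Finset _)) :
      ((#(spanningTreesAbove (edgeTupleGraph e)) : ℝ) /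
        (Fintype.card V : ℝ) ^ (Fintype.card V - 2)) ^ 2 = ((2 / Fintype.card V : ℝ) ^ k) ^ 2 := by
    rw [(mem_filter.1 he).2.card_spanningTreesAbove, natCard_edgeSet_edgeTupleGraph,
      mul_div_cancel_left₀ _ (by positivity)]
  calc 2 ^ k * ((Fintype.card V).descFactorial (2 * k) / (Fintype.card V : ℝ) ^ (2 * k))
      ≤ 2 ^ k * ((2 ^ k * #{e : Fin k ↪ (⊤ : SimpleGraph V).edgeSet |
          IsMatchingGraph (edgeTupleGraph e)} : ℕ) / (Fintype.card V : ℝ) ^ (2 * k)) := by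
        gcongr
        exact descFactorial_le_two_pow_mul_card_isMatchingGraph V k
    _ = ∑ e : Fin k ↪ (⊤ : SimpleGraph V).edgeSet with IsMatchingGraph (edgeTupleGraph e),
          (#(spanningTreesAbove (edgeTupleGraph e)) /
            (Fintype.card V : ℝ) ^ (Fintype.card V - 2)) ^ 2 := by
        rw [sum_congr rfl hterm, sum_const, nsmul_eq_mul, div_pow, div_pow, ← pow_mul, ← pow_mul,
          mul_comm k 2]
        push_cast
        ring
    _ ≤ commonEdgesFactorialMoment V k := by
        rw [commonEdgesFactorialMoment_eq_sum]
        exact sum_le_sum_of_subset_of_nonneg (filter_subset _ _) fun _ _ _ => by positivity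

lemma one_sub_sq_div_le_descFactorial_div_pow {n : ℕ} (hn : 0 < n) (m : ℕ) :
    1 - (m : ℝ) ^ 2 / n ≤ n.descFactorial m / (n : ℝ) ^ m := by
  have hn : (0 : ℝ) < n := Nat.cast_pos.2 hn
  rcases lt_or_ge n m with hnm | hmn
  · have hsq : (n : ℝ) ≤ (m : ℝ) ^ 2 := by
      exact_mod_cast hnm.le.trans (Nat.le_self_pow two_ne_zero m)
    exact (sub_nonpos.2 ((one_le_div hn).2 hsq)).trans (by positivity)
  have hm : (m : ℝ) / n ≤ 1 := (div_le_one hn).2 (by exact_mod_cast hmn)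
  calc 1 - (m : ℝ) ^ 2 / n = 1 + m * -(m / n : ℝ) := by ring
    _ ≤ (1 + -(m / n : ℝ)) ^ m := one_add_mul_le_pow (by linarith) m
    _ = ((n - m : ℕ) : ℝ) ^ m / (n : ℝ) ^ m := by
        rw [Nat.cast_sub hmn, ← div_pow, sub_div, div_self hn.ne', sub_eq_add_neg]
    _ ≤ n.descFactorial m / (n : ℝ) ^ m := by
        gcongr
        exact_mod_cast (Nat.pow_le_pow_left (by omega) m).trans (Nat.pow_sub_le_descFactorial n m)

theorem abs_commonEdgesFactorialMoment_sub_le :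
    |commonEdgesFactorialMoment V k - 2 ^ k| ≤ 2 ^ k * (2 * k : ℝ) ^ 2 / Fintype.card V := by
  have hlower : 2 ^ k * (1 - (2 * k : ℝ) ^ 2 / Fintype.card V) ≤ commonEdgesFactorialMoment V k :=
    le_trans (by
      gcongr
      exact_mod_cast one_sub_sq_div_le_descFactorial_div_pow Fintype.card_pos (2 * k))
      (le_commonEdgesFactorialMoment V k)
  rw [abs_sub_comm, abs_of_nonneg (sub_nonneg.2 (commonEdgesFactorialMoment_le V k))]
  linarith [mul_div_assoc ((2 : ℝ) ^ k) ((2 * k : ℝ) ^ 2) (Fintype.card V)]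

end FactorialMoments

section Moments

lemma mul_descFactorial (m j : ℕ) :
    m * m.descFactorial j = m.descFactorial (j + 1) + j * m.descFactorial j := by
  rcases lt_or_ge m j with h | h
  · simp [Nat.descFactorial_of_lt h, Nat.descFactorial_succ]
  · rw [Nat.descFactorial_succ, ← add_mul, Nat.sub_add_cancel h]

theorem pow_eq_sum_stirlingSecond_mul_descFactorial (m r : ℕ) :
    m ^ r = ∑ j ∈ range (r + 1), Nat.stirlingSecond r j * m.descFactorial j := by
  induction r with
  | zero => simp
  | succ r ih =>
    have hshift : ∑ j ∈ range (r + 1), Nat.stirlingSecond r j * (j * m.descFactorial j) =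
        ∑ j ∈ range (r + 1),
          Nat.stirlingSecond r (j + 1) * ((j + 1) * m.descFactorial (j + 1)) := by
      rw [sum_range_succ', sum_range_succ]
      simp [Nat.stirlingSecond_eq_zero_of_lt]
    calc m ^ (r + 1)
        = ∑ j ∈ range (r + 1), Nat.stirlingSecond r j * (m * m.descFactorial j) := by
          rw [pow_succ', ih, mul_sum]
          exact sum_congr rfl fun j _ => mul_left_comm _ _ _
      _ = ∑ j ∈ range (r + 1), Nat.stirlingSecond (r + 1) (j + 1) * m.descFactorial (j + 1) := by
          simp_rw [mul_descFactorial, mul_add, sum_add_distrib, hshift, ← sum_add_distrib,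
            Nat.stirlingSecond_succ_succ]
          exact sum_congr rfl fun j _ => by ring
      _ = ∑ j ∈ range (r + 1 + 1), Nat.stirlingSecond (r + 1) j * m.descFactorial j := by
          simp [sum_range_succ' _ (r + 1)]

lemma hasSum_pow_mul_descFactorial_div_factorial (x : ℝ) (j : ℕ) :
    HasSum (fun k : ℕ => x ^ k * k.descFactorial j / k.factorial) (x ^ j * Real.exp x) := by
  have hzero : ∑ k ∈ range j, x ^ k * k.descFactorial j / (k.factorial : ℝ) = 0 :=
    sum_eq_zero fun k hk => by simp [Nat.descFactorial_of_lt (mem_range.1 hk)]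
  rw [← hasSum_nat_add_iff' j, hzero, sub_zero, Real.exp_eq_exp_ℝ]
  refine ((NormedSpace.expSeries_div_hasSum_exp x).mul_left (x ^ j)).congr_fun fun k => ?_
  have hfactorial : ((k + j).factorial : ℝ) = k.factorial * (k + j).descFactorial j := by
    rw [← Nat.factorial_mul_descFactorial (Nat.le_add_left j k), Nat.add_sub_cancel, Nat.cast_mul]
  have hne : ((k + j).descFactorial j : ℝ) ≠ 0 :=
    Nat.cast_ne_zero.2 (Nat.descFactorial_pos.2 (Nat.le_add_left j k)).ne'
  rw [hfactorial, pow_add]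
  field_simp

theorem exp_neg_mul_tsum_pow_mul_pow_div_factorial (x : ℝ) (r : ℕ) :
    Real.exp (-x) * ∑' k : ℕ, x ^ k * (k : ℝ) ^ r / k.factorial =
      ∑ j ∈ range (r + 1), Nat.stirlingSecond r j * x ^ j := by
  have hsum : HasSum (fun k : ℕ => x ^ k * (k : ℝ) ^ r / k.factorial)
      (∑ j ∈ range (r + 1), Nat.stirlingSecond r j * (x ^ j * Real.exp x)) := by
    refine (hasSum_sum fun j _ =>
      (hasSum_pow_mul_descFactorial_div_factorial x j).mul_left _).congr_fun fun k => ?_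
    rw [← Nat.cast_pow, pow_eq_sum_stirlingSecond_mul_descFactorial]
    push_cast
    rw [mul_sum, sum_div]
    exact sum_congr rfl fun j _ => by ring
  rw [hsum.tsum_eq, mul_sum]
  refine sum_congr rfl fun j _ => ?_
  rw [mul_left_comm, mul_left_comm (Real.exp _), ← Real.exp_add, neg_add_cancel, Real.exp_zero,
    mul_one]

lemma commonEdgesMoment_eq_sum (n r : ℕ) :
    commonEdgesMoment n r =
      ∑ j ∈ range (r + 1), Nat.stirlingSecond r j * commonEdgesFactorialMoment (Fin n) j := by
  have hpow (m : ℕ) : (m : ℝ) ^ r =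
      ∑ j ∈ range (r + 1), (Nat.stirlingSecond r j : ℝ) * m.descFactorial j := by
    exact_mod_cast pow_eq_sum_stirlingSecond_mul_descFactorial m r
  simp_rw [commonEdgesFactorialMoment, ← mul_div_assoc, ← sum_div, mul_sum, Fintype.card_fin]
  rw [sum_comm, commonEdgesMoment]
  simp_rw [← hpow, sum_filter]
  congr!

end Moments

/-- For every fixed positive integer `r` there is a constant `C > 0`
such that for all `n ≥ 2`, the `r`-th moment of `Xₙ` differs from
`e⁻² ∑_{k≥0} 2^k k^r / k!` (the `r`-th moment of a Poisson variable of mean `2`)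
by at most `C/n`; in particular `E(Xₙʳ)` converges to this value as `n → ∞`. -/
theorem moment_convergence (r : ℕ) (hr : 0 < r) :
    ∃ C : ℝ, 0 < C ∧ ∀ n : ℕ, 2 ≤ n →
      |commonEdgesMoment n r -
          Real.exp (-2) * ∑' k : ℕ, 2 ^ k * (k : ℝ) ^ r / k.factorial| ≤ C / n := by
  set C : ℝ := ∑ j ∈ range (r + 1), Nat.stirlingSecond r j * (2 ^ j * (2 * j) ^ 2)
  have : 0 ≤ C := by positivity
  refine ⟨C + 1, by positivity, fun n hn => ?_⟩
  have : NeZero n := ⟨by omega⟩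
  calc |commonEdgesMoment n r - Real.exp (-2) * ∑' k : ℕ, 2 ^ k * (k : ℝ) ^ r / k.factorial|
      = |∑ j ∈ range (r + 1), Nat.stirlingSecond r j *
          (commonEdgesFactorialMoment (Fin n) j - 2 ^ j)| := by
        rw [commonEdgesMoment_eq_sum, exp_neg_mul_tsum_pow_mul_pow_div_factorial]
        simp_rw [mul_sub, sum_sub_distrib]
    _ ≤ ∑ j ∈ range (r + 1), Nat.stirlingSecond r j * (2 ^ j * (2 * j) ^ 2 / n : ℝ) := by
        refine (abs_sum_le_sum_abs _ _).trans (sum_le_sum fun j _ => ?_)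
        rw [abs_mul, Nat.abs_cast]
        gcongr
        simpa using abs_commonEdgesFactorialMoment_sub_le (Fin n) j
    _ = C / n := by simp_rw [C, sum_div, mul_div_assoc]
    _ ≤ (C + 1) / n := by gcongr; linarith
end

section
/- For every n ≥ 2, the variance of the number of common edges of two independent uniformly random spanning trees of K_n equals exactly V(X_n) = (n−1)(n−2)(2n−3)/n³. -/
open Classical in
/-- The `r`-th moment `E(Xₙʳ)` (as a rational number) of the number `Xₙ` of common
edges of two spanning trees of `K_n` chosen independently and uniformly at random. -/
noncomputable def commonEdgesMomentQ (n r : ℕ) : ℚ :=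
  (∑ p : SimpleGraph (Fin n) × SimpleGraph (Fin n),
      if p.1.IsTree ∧ p.2.IsTree then (Nat.card (p.1 ⊓ p.2).edgeSet : ℚ) ^ r else 0) /
    (n : ℚ) ^ (2 * (n - 2))

/-!
By Moon's formula, a uniformly random spanning tree of `K_n` contains a given forest `F` with
probability `∏ |A| / n ^ |E(F)|`, the product running over the components `A` of `F`. It is proved
by induction on the number of components: the pairs consisting of a tree `T ⊇ F` and an edge of `T`
joining two components of `F` are counted in two ways, using that `T` has exactly `#components - 1`
such edges.

Expanding the `r`-th power of the number of common edges over `r`-tuples of edges gives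
`E(Xₙʳ) = ∑ P(e₁, …, eᵣ ∈ T)²`, by independence of the two trees. For `r = 2` the two edges
coincide, share a vertex, or are disjoint, with `P` equal to `2 / n`, `3 / n²`, `4 / n²`
respectively.
-/

open Finset SimpleGraph

namespace UniformSpanningTree

section Partition

variable {α : Type*} [DecidableEq α] {s : Finset α}

theorem mem_parts_iff_exists_part_eq (P : Finpartition s) {t : Finset α} :
    t ∈ P.parts ↔ ∃ a ∈ s, P.part a = t :=
  ⟨fun ht ↦ P.part_surjOn ht, fun ⟨_, ha, h⟩ ↦ h ▸ P.part_mem.2 ha⟩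

theorem sum_inv_card_part (P : Finpartition s) :
    ∑ a ∈ s, (#(P.part a) : ℚ)⁻¹ = #P.parts := by
  rw [← sum_fiberwise_of_maps_to fun a ha ↦ P.part_mem.2 ha, card_eq_sum_ones, Nat.cast_sum]
  refine sum_congr rfl fun t ht ↦ ?_
  have fiber_eq : {a ∈ s | P.part a = t} = t := by
    ext a
    rw [mem_filter, P.part_eq_iff_mem ht, and_iff_right_of_imp fun ha ↦ P.subset ht ha]
  have card_ne_zero : (#t : ℚ) ≠ 0 := by
    exact_mod_cast (P.nonempty_of_mem_parts ht).card_ne_zero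
  rw [sum_congr rfl fun a ha ↦ by rw [(mem_filter.1 ha).2], fiber_eq, sum_const, nsmul_eq_mul,
    mul_inv_cancel₀ card_ne_zero, Nat.cast_one]

variable [Fintype α]

theorem sum_inv_card_part_add_inv_card_part (P : Finpartition (univ : Finset α)) :
    ∑ p : α × α with p.2 ∉ P.part p.1, ((#(P.part p.1) : ℚ)⁻¹ + (#(P.part p.2) : ℚ)⁻¹) =
      2 * Fintype.card α * (#P.parts - 1) := by
  have sum_left : ∑ p : α × α with p.2 ∉ P.part p.1, (#(P.part p.1) : ℚ)⁻¹ =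
      Fintype.card α * (#P.parts - 1) := by
    have inner (a : α) : ∑ b with b ∉ P.part a, (#(P.part a) : ℚ)⁻¹ =
        Fintype.card α * (#(P.part a) : ℚ)⁻¹ - 1 := by
      have part_ne_zero : (#(P.part a) : ℚ) ≠ 0 := by
        exact_mod_cast (P.part_nonempty.2 (mem_univ a)).card_ne_zero
      rw [sum_const, nsmul_eq_mul, filter_notMem_eq_sdiff, cast_card_sdiff (subset_univ _),
        card_univ, sub_mul, mul_inv_cancel₀ part_ne_zero]
    rw [sum_filter, Fintype.sum_prod_type]
    simp only [← sum_filter, inner, sum_sub_distrib, ← mul_sum, sum_inv_card_part, sum_const,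
      card_univ, nsmul_one]
    ring
  have sum_right : ∑ p : α × α with p.2 ∉ P.part p.1, (#(P.part p.2) : ℚ)⁻¹ =
      ∑ p : α × α with p.2 ∉ P.part p.1, (#(P.part p.1) : ℚ)⁻¹ := by
    refine sum_equiv (Equiv.prodComm α α) (fun p ↦ ?_) fun _ _ ↦ rfl
    simp [P.mem_part_iff_part_eq_part, eq_comm]
  rw [sum_add_distrib, sum_right, sum_left]
  ring

end Partition

section Components

theorem reachable_sup_edge_iff {V : Type*} {G : SimpleGraph V} {u v a b : V} :
    (G ⊔ edge u v).Reachable a b ↔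
      G.Reachable a b ∨ G.Reachable a u ∧ G.Reachable v b ∨
        G.Reachable a v ∧ G.Reachable u b := by
  constructor
  · rintro ⟨p⟩
    induction p with
    | nil => exact .inl .rfl
    | cons adj p ih =>
      rw [sup_adj, edge_adj] at adj
      rcases adj with adj | ⟨⟨rfl, rfl⟩ | ⟨rfl, rfl⟩, -⟩
      · exact ih.imp adj.reachable.trans
          (Or.imp (And.imp_left adj.reachable.trans) (And.imp_left adj.reachable.trans))
      · grind [Reachable.refl]
      · grind [Reachable.refl]
  · have mono {x y} (h : G.Reachable x y) : (G ⊔ edge u v).Reachable x y :=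
      h.mono le_sup_left
    have huv : (G ⊔ edge u v).Reachable u v := by
      by_cases h : u = v
      · rw [h]
      · exact Adj.reachable (by simp [edge_adj, h])
    rintro (h | ⟨hau, hvb⟩ | ⟨hav, hub⟩)
    · exact mono h
    · exact (mono hau).trans (huv.trans (mono hvb))
    · exact (mono hav).trans (huv.symm.trans (mono hub))

open scoped Classical in
/-- The partition of the vertices of `G` into connected components. Unlike the quotient
`G.ConnectedComponent`, its parts are finsets, whose cardinalities enter Moon's formula. -/
noncomputable def components {V : Type*} [Fintype V] [DecidableEq V] (G : SimpleGraph V) :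
    Finpartition (univ : Finset V) :=
  .ofSetoid G.reachableSetoid

variable {V : Type*} [Fintype V] [DecidableEq V] {G F : SimpleGraph V} {u v : V}

open scoped Classical in
theorem mem_part_components {a b : V} :
    b ∈ (components G).part a ↔ G.Reachable a b :=
  Finpartition.mem_part_ofSetoid_iff_rel

theorem part_components_eq_iff {a b : V} :
    (components G).part a = (components G).part b ↔ G.Reachable a b := by
  rw [← Finpartition.mem_part_iff_part_eq_part _ (mem_univ a) (mem_univ b),
    mem_part_components, SimpleGraph.reachable_comm]

theorem part_components_sup_edge (G : SimpleGraph V) (u v w : V) :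
    (components (G ⊔ edge u v)).part w =
      if w ∈ (components G).part u ∪ (components G).part v then
        (components G).part u ∪ (components G).part v
      else (components G).part w := by
  ext x
  split_ifs with h <;>
    simp only [mem_union, mem_part_components, reachable_sup_edge_iff] at h ⊢ <;>
    grind [Reachable.symm, Reachable.trans]

theorem parts_components_sup_edge (G : SimpleGraph V) (u v : V) :
    (components (G ⊔ edge u v)).parts =
      insert ((components G).part u ∪ (components G).part v)
        (((components G).parts.erase ((components G).part u)).erase
          ((components G).part v)) := by
  ext A
  simp only [mem_insert, mem_erase, mem_parts_iff_exists_part_eq, mem_univ, true_and]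
  constructor
  · rintro ⟨w, rfl⟩
    rw [part_components_sup_edge]
    split_ifs with hw
    · exact .inl rfl
    · simp only [mem_union, mem_part_components, not_or] at hw
      exact .inr ⟨mt part_components_eq_iff.1 fun h ↦ hw.2 h.symm,
        mt part_components_eq_iff.1 fun h ↦ hw.1 h.symm, w, rfl⟩
  · rintro (rfl | ⟨hv, hu, w, rfl⟩)
    · refine ⟨u, ?_⟩
      rw [part_components_sup_edge, if_pos]
      exact mem_union_left _ (mem_part_components.2 .rfl)
    · refine ⟨w, ?_⟩
      rw [part_components_sup_edge, if_neg]
      simp only [mem_union, mem_part_components, not_or]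
      exact ⟨fun h ↦ hu (part_components_eq_iff.2 h.symm),
        fun h ↦ hv (part_components_eq_iff.2 h.symm)⟩

theorem part_components_mem_erase (huv : ¬G.Reachable u v) :
    (components G).part v ∈
      (components G).parts.erase ((components G).part u) :=
  mem_erase.2 ⟨fun h ↦ huv (part_components_eq_iff.1 h.symm),
    (components G).part_mem.2 (mem_univ v)⟩

theorem part_components_union_notMem (G : SimpleGraph V) (u v : V) :
    (components G).part u ∪ (components G).part v ∉
      ((components G).parts.erase ((components G).part u)).erase ((components G).part v) := by
  intro h
  have hu : u ∈ (components G).part u ∪ (components G).part v :=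
    mem_union_left _ (mem_part_components.2 .rfl)
  exact (mem_erase.1 (mem_of_mem_erase h)).1
    ((components G).part_eq_of_mem (mem_of_mem_erase (mem_of_mem_erase h)) hu).symm

theorem prod_card_parts_components_sup_edge (huv : ¬G.Reachable u v) :
    ∏ A ∈ (components (G ⊔ edge u v)).parts, (#A : ℚ) =
      (∏ A ∈ (components G).parts, (#A : ℚ)) *
        ((#((components G).part u) : ℚ)⁻¹ + (#((components G).part v) : ℚ)⁻¹) := by
  have hu := (components G).part_mem.2 (mem_univ u)
  have disjoint : Disjoint ((components G).part u) ((components G).part v) :=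
    (components G).disjoint hu ((components G).part_mem.2 (mem_univ v))
      (mt part_components_eq_iff.1 huv)
  have ne_zero (w : V) : (#((components G).part w) : ℚ) ≠ 0 := by
    exact_mod_cast card_ne_zero_of_mem (mem_part_components.2 (Reachable.refl w))
  rw [parts_components_sup_edge, prod_insert (part_components_union_notMem G u v),
    card_union_of_disjoint disjoint, ← mul_prod_erase _ _ hu,
    ← mul_prod_erase _ _ (part_components_mem_erase huv)]
  have := ne_zero u
  have := ne_zero v
  field_simp
  push_cast
  ring

theorem card_parts_components_sup_edge (huv : ¬G.Reachable u v) :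
    #(components (G ⊔ edge u v)).parts + 1 = #(components G).parts := by
  rw [parts_components_sup_edge, card_insert_of_notMem (part_components_union_notMem G u v),
    card_erase_add_one (part_components_mem_erase huv),
    card_erase_add_one ((components G).part_mem.2 (mem_univ u))]

theorem components_bot : components (⊥ : SimpleGraph V) = ⊥ := by
  ext A
  simp [mem_parts_iff_exists_part_eq, Finset.ext_iff, mem_part_components, eq_comm]

theorem part_components_bot (w : V) : (components (⊥ : SimpleGraph V)).part w = {w} := by
  ext x
  rw [mem_part_components, reachable_bot, mem_singleton, eq_comm]

theorem part_components_edge (u v w : V) : (components (edge u v)).part w =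
    if w ∈ ({u, v} : Finset V) then {u, v} else {w} := by
  rw [← bot_sup_eq (edge u v), part_components_sup_edge]
  simp only [part_components_bot, singleton_union]

@[elab_as_elim]
theorem isAcyclic_induction {V : Type*} [Finite V]
    {P : ∀ F : SimpleGraph V, F.IsAcyclic → Prop} (bot : P ⊥ isAcyclic_bot)
    (sup_edge : ∀ (F : SimpleGraph V) (u v : V) (hF : F.IsAcyclic) (huv : ¬F.Reachable u v),
      P F hF → P (F ⊔ edge u v) (hF.sup_edge_of_not_reachable huv))
    {F : SimpleGraph V} (hF : F.IsAcyclic) : P F hF := by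
  induction F using WellFoundedLT.induction with
  | ind F ih =>
    by_cases hbot : F = ⊥
    · subst hbot
      exact bot
    obtain ⟨u, v, huv⟩ := ne_bot_iff_exists_adj.1 hbot
    have not_reachable : ¬(F.deleteEdges {s(u, v)}).Reachable u v :=
      isAcyclic_iff_forall_adj_isBridge.1 hF huv
    have sup_eq : F.deleteEdges {s(u, v)} ⊔ edge u v = F := by
      rw [deleteEdges, edge, sdiff_sup_cancel]
      simpa using .inr huv
    have lt : F.deleteEdges {s(u, v)} < F :=
      (deleteEdges_le _).lt_of_ne fun h ↦ not_reachable (by rw [h]; exact huv.reachable)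
    have acyclic := hF.anti lt.le
    have := sup_edge _ u v acyclic not_reachable (ih _ lt acyclic)
    simpa only [sup_eq] using this

theorem card_parts_components_add_card_edgeSet (hF : F.IsAcyclic) :
    #(components F).parts + Nat.card F.edgeSet = Fintype.card V := by
  classical
  induction hF using isAcyclic_induction with
  | bot => simp [components_bot]
  | sup_edge F u v _ huv ih =>
    have card_edges := F.card_edgeFinset_sup_edge (mt Adj.reachable huv)
      fun h ↦ huv (h ▸ .rfl)
    simp only [Nat.card_eq_fintype_card, ← edgeFinset_card] at ih ⊢
    have := card_parts_components_sup_edge huv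
    lia

end Components

section Moon

variable {V : Type*} [Fintype V] [DecidableEq V] {F : SimpleGraph V} {u v : V}

open scoped Classical in
/-- The spanning trees of the complete graph on `V` whose edges include `S`, encoded as trees with
vertex set `V`. -/
noncomputable def spanningTreesThrough (S : Set (Sym2 V)) : Finset (SimpleGraph V) :=
  {T | T.IsTree ∧ S ⊆ T.edgeSet}

theorem mem_spanningTreesThrough {S : Set (Sym2 V)} {T : SimpleGraph V} :
    T ∈ spanningTreesThrough S ↔ T.IsTree ∧ S ⊆ T.edgeSet := by
  simp [spanningTreesThrough]

theorem mem_spanningTreesThrough_edgeSet {T : SimpleGraph V} :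
    T ∈ spanningTreesThrough F.edgeSet ↔ T.IsTree ∧ F ≤ T := by
  rw [mem_spanningTreesThrough, edgeSet_subset_edgeSet]

theorem adj_of_le_of_reachable {V : Type*} {F T : SimpleGraph V} {u v : V} (hT : T.IsAcyclic)
    (hFT : F ≤ T) (huv : F.Reachable u v) (adj : T.Adj u v) : F.Adj u v := by
  by_contra not_adj
  refine isAcyclic_iff_forall_adj_isBridge.1 hT adj (huv.mono fun a b hab ↦ ?_)
  rw [deleteEdges_adj]
  refine ⟨hFT hab, fun h ↦ not_adj ?_⟩
  rwa [← mem_edgeSet, ← Set.mem_singleton_iff.1 h]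

open scoped Classical in
theorem card_adj_not_reachable {T : SimpleGraph V} (hT : T.IsTree) (hFT : F ≤ T) :
    #{p : V × V | ¬F.Reachable p.1 p.2 ∧ T.Adj p.1 p.2} = 2 * (#(components F).parts - 1) := by
  have adj_iff (p : V × V) : T.Adj p.1 p.2 ∧ F.Reachable p.1 p.2 ↔ F.Adj p.1 p.2 :=
    ⟨fun h ↦ adj_of_le_of_reachable hT.isAcyclic hFT h.2 h.1, fun h ↦ ⟨hFT h, h.reachable⟩⟩
  have split := card_filter_add_card_filter_not (s := {p : V × V | T.Adj p.1 p.2})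
    fun p ↦ F.Reachable p.1 p.2
  have tree_darts : 2 * #T.edgeFinset = #{p : V × V | T.Adj p.1 p.2} := T.two_mul_card_edgeFinset
  have forest_darts : 2 * #F.edgeFinset = #{p : V × V | F.Adj p.1 p.2} := F.two_mul_card_edgeFinset
  have tree_edges := hT.card_edgeFinset
  have forest_edges := card_parts_components_add_card_edgeSet (hT.isAcyclic.anti hFT)
  rw [Nat.card_eq_fintype_card, ← edgeFinset_card] at forest_edges
  simp only [filter_filter, adj_iff] at split
  simp only [and_comm (a := ¬_)]
  lia

open scoped Classical in
theorem sum_card_spanningTreesThrough_sup_edge (F : SimpleGraph V) :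
    ∑ p : V × V with ¬F.Reachable p.1 p.2, #(spanningTreesThrough (F ⊔ edge p.1 p.2).edgeSet) =
      2 * (#(components F).parts - 1) * #(spanningTreesThrough F.edgeSet) := by
  let r (p : V × V) (T : SimpleGraph V) : Prop := T.Adj p.1 p.2
  calc
    _ = ∑ p : V × V with ¬F.Reachable p.1 p.2,
          #(bipartiteAbove r (spanningTreesThrough F.edgeSet) p) := by
      refine sum_congr rfl fun p hp ↦ congrArg card ?_
      have ne : p.1 ≠ p.2 := fun h ↦ (mem_filter.1 hp).2 (h ▸ .rfl)
      ext T
      rw [mem_spanningTreesThrough_edgeSet, sup_le_iff, edge_le_iff, mem_bipartiteAbove,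
        mem_spanningTreesThrough_edgeSet, or_iff_right ne, and_assoc]
    _ = ∑ T ∈ spanningTreesThrough F.edgeSet,
          #(bipartiteBelow r {p : V × V | ¬F.Reachable p.1 p.2} T) :=
      sum_card_bipartiteAbove_eq_sum_card_bipartiteBelow r
    _ = ∑ T ∈ spanningTreesThrough F.edgeSet, 2 * (#(components F).parts - 1) := by
      refine sum_congr rfl fun T hT ↦ ?_
      rw [mem_spanningTreesThrough_edgeSet] at hT
      rw [← card_adj_not_reachable hT.1 hT.2, bipartiteBelow, filter_filter]
    _ = _ := by rw [sum_const, smul_eq_mul, mul_comm]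

theorem isTree_of_card_parts_components_eq_one (hF : F.IsAcyclic)
    (hc : #(components F).parts = 1) : F.IsTree := by
  obtain ⟨A, hA⟩ := card_eq_one.1 hc
  have part_eq (w : V) : (components F).part w = A := by
    simpa [hA] using (components F).part_mem.2 (mem_univ w)
  have nonempty : Nonempty V := by
    obtain ⟨w, -⟩ := (components F).nonempty_of_mem_parts (hA ▸ mem_singleton_self A)
    exact ⟨w⟩
  exact ⟨⟨fun a b ↦ part_components_eq_iff.1 ((part_eq a).trans (part_eq b).symm)⟩, hF⟩

theorem spanningTreesThrough_edgeSet_of_isTree (hF : F.IsTree) :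
    spanningTreesThrough F.edgeSet = {F} := by
  ext T
  rw [mem_spanningTreesThrough_edgeSet, mem_singleton]
  constructor
  · rintro ⟨hT, hFT⟩
    exact ((isTree_iff_maximal_isAcyclic.1 hF).2.eq_of_ge hT.isAcyclic hFT)
  · rintro rfl
    exact ⟨hF, le_rfl⟩

theorem card_spanningTreesThrough_edgeSet [Nonempty V] (hF : F.IsAcyclic) :
    (#(spanningTreesThrough F.edgeSet) : ℚ) * Fintype.card V ^ 2 =
      Fintype.card V ^ #(components F).parts * ∏ A ∈ (components F).parts, (#A : ℚ) := by
  classical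
  obtain ⟨m, hm⟩ : ∃ m, #(components F).parts = m + 1 :=
    Nat.exists_eq_add_one.2 (card_pos.2 ((components F).parts_nonempty univ_nonempty.ne_empty))
  induction m generalizing F with
  | zero =>
    rw [zero_add] at hm
    obtain ⟨A, hA⟩ := card_eq_one.1 hm
    have card_A : #A = Fintype.card V := by
      simpa [hA] using (components F).sum_card_parts
    rw [spanningTreesThrough_edgeSet_of_isTree (isTree_of_card_parts_components_eq_one hF hm),
      card_singleton, hm, hA, prod_singleton, card_A]
    ring
  | succ m ih =>
    have card_sup_edge (p : V × V) (hp : ¬F.Reachable p.1 p.2) :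
        (#(spanningTreesThrough (F ⊔ edge p.1 p.2).edgeSet) : ℚ) * Fintype.card V ^ 2 =
          Fintype.card V ^ (m + 1) * (∏ A ∈ (components F).parts, (#A : ℚ)) *
            ((#((components F).part p.1) : ℚ)⁻¹ + (#((components F).part p.2) : ℚ)⁻¹) := by
      have card_parts : #(components (F ⊔ edge p.1 p.2)).parts = m + 1 := by
        have := card_parts_components_sup_edge hp
        lia
      rw [ih (hF.sup_edge_of_not_reachable hp) card_parts, card_parts,
        prod_card_parts_components_sup_edge hp, mul_assoc]
    have double_count := congrArg (Nat.cast (R := ℚ)) (sum_card_spanningTreesThrough_sup_edge F)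
    have weights := sum_inv_card_part_add_inv_card_part (components F)
    simp only [mem_part_components] at weights
    rw [hm] at double_count weights ⊢
    push_cast [add_tsub_cancel_right] at double_count weights
    have two_mul_ne_zero : (2 * (m + 1) : ℚ) ≠ 0 := by positivity
    refine mul_left_cancel₀ two_mul_ne_zero ?_
    calc
      _ = (2 * (m + 1) * (#(spanningTreesThrough F.edgeSet) : ℚ)) * Fintype.card V ^ 2 := by ring
      _ = ∑ p : V × V with ¬F.Reachable p.1 p.2,
            (#(spanningTreesThrough (F ⊔ edge p.1 p.2).edgeSet) : ℚ) * Fintype.card V ^ 2 := by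
        rw [← double_count, sum_mul]
      _ = Fintype.card V ^ (m + 1) * (∏ A ∈ (components F).parts, (#A : ℚ)) *
            (2 * Fintype.card V * (m + 1)) := by
        rw [sum_congr rfl fun p hp ↦ card_sup_edge p (mem_filter.1 hp).2, ← mul_sum, weights]
      _ = _ := by ring

/-- The probability that a uniformly random spanning tree of the complete graph on `V` contains
all edges in `S`. The denominator is the number of spanning trees, by Cayley's formula. -/
noncomputable def containmentProb (S : Set (Sym2 V)) : ℚ :=
  #(spanningTreesThrough S) / (Fintype.card V : ℚ) ^ (Fintype.card V - 2)

theorem containmentProb_edgeSet [Nonempty V] (hF : F.IsAcyclic) :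
    containmentProb F.edgeSet =
      (∏ A ∈ (components F).parts, (#A : ℚ)) / Fintype.card V ^ Nat.card F.edgeSet := by
  have card_ne_zero : (Fintype.card V : ℚ) ≠ 0 := by exact_mod_cast Fintype.card_ne_zero
  have pow_eq : (Fintype.card V : ℚ) ^ (Fintype.card V - 2) * Fintype.card V ^ 2 =
      Fintype.card V ^ #(components F).parts * Fintype.card V ^ Nat.card F.edgeSet := by
    rw [← pow_add _ #_, card_parts_components_add_card_edgeSet hF]
    obtain h | h := Nat.lt_or_ge (Fintype.card V) 2
    · have card_eq_one : Fintype.card V = 1 := by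
        have := Fintype.card_pos (α := V)
        lia
      simp [card_eq_one]
    · rw [← pow_add, Nat.sub_add_cancel h]
  rw [containmentProb, div_eq_div_iff (by positivity) (by positivity)]
  refine mul_right_cancel₀ (pow_ne_zero 2 card_ne_zero) ?_
  calc
    _ = #(spanningTreesThrough F.edgeSet) * (Fintype.card V : ℚ) ^ 2 *
          Fintype.card V ^ Nat.card F.edgeSet := by ring
    _ = (∏ A ∈ (components F).parts, (#A : ℚ)) *
          (Fintype.card V ^ #(components F).parts * Fintype.card V ^ Nat.card F.edgeSet) := by
      rw [card_spanningTreesThrough_edgeSet hF]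
      ring
    _ = _ := by rw [← pow_eq, mul_assoc]

theorem containmentProb_edgeSet_sup_edge (hF : F.IsAcyclic) (huv : ¬F.Reachable u v) :
    containmentProb (F ⊔ edge u v).edgeSet = containmentProb F.edgeSet *
      ((#((components F).part u) : ℚ)⁻¹ + (#((components F).part v) : ℚ)⁻¹) / Fintype.card V := by
  have : Nonempty V := ⟨u⟩
  have card_edges : Nat.card (F ⊔ edge u v).edgeSet = Nat.card F.edgeSet + 1 := by
    have forest := card_parts_components_add_card_edgeSet hF
    have forest_sup_edge :=
      card_parts_components_add_card_edgeSet (hF.sup_edge_of_not_reachable huv)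
    have := card_parts_components_sup_edge huv
    lia
  rw [containmentProb_edgeSet (hF.sup_edge_of_not_reachable huv), containmentProb_edgeSet hF,
    prod_card_parts_components_sup_edge huv, card_edges, pow_succ]
  ring

theorem containmentProb_of_isDiag {S : Set (Sym2 V)} {e : Sym2 V} (he : e ∈ S) (hdiag : e.IsDiag) :
    containmentProb S = 0 := by
  have empty : spanningTreesThrough S = ∅ := eq_empty_of_forall_notMem fun T hT ↦
    T.not_isDiag_of_mem_edgeSet ((mem_spanningTreesThrough.1 hT).2 he) hdiag
  rw [containmentProb, empty, card_empty, Nat.cast_zero, zero_div]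

theorem containmentProb_singleton {e : Sym2 V} (he : ¬e.IsDiag) :
    containmentProb {e} = 2 / Fintype.card V := by
  induction e with | _ u v
  have : Nonempty V := ⟨u⟩
  have huv : u ≠ v := he
  have edgeSet_eq : ({s(u, v)} : Set (Sym2 V)) = (⊥ ⊔ edge u v).edgeSet := by
    rw [bot_sup_eq, edgeSet_edge_of_ne huv]
  rw [edgeSet_eq, containmentProb_edgeSet_sup_edge isAcyclic_bot (by rwa [reachable_bot]),
    containmentProb_edgeSet isAcyclic_bot, part_components_bot, part_components_bot,
    components_bot]
  norm_num

theorem containmentProb_pair {e f : Sym2 V} (he : ¬e.IsDiag) (hf : ¬f.IsDiag) (hne : e ≠ f) :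
    containmentProb {e, f} =
      (if Disjoint e.toFinset f.toFinset then 4 else 3) / (Fintype.card V : ℚ) ^ 2 := by
  induction e with | _ u v
  induction f with | _ x y
  have huv : u ≠ v := he
  have hxy : x ≠ y := hf
  have edgeSet_eq : ({s(u, v), s(x, y)} : Set (Sym2 V)) = (edge u v ⊔ edge x y).edgeSet := by
    rw [edgeSet_sup, edgeSet_edge_of_ne huv, edgeSet_edge_of_ne hxy, Set.singleton_union]
  have not_both : ¬(x ∈ ({u, v} : Finset V) ∧ y ∈ ({u, v} : Finset V)) := by
    grind
  have not_reachable : ¬(edge u v).Reachable x y := by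
    rw [← mem_part_components, part_components_edge]
    grind
  have acyclic : (edge u v).IsAcyclic := by
    rw [← bot_sup_eq (edge u v)]
    exact isAcyclic_bot.sup_edge_of_not_reachable (by rwa [reachable_bot])
  have disjoint_iff : Disjoint s(u, v).toFinset s(x, y).toFinset ↔
      x ∉ ({u, v} : Finset V) ∧ y ∉ ({u, v} : Finset V) := by
    rw [Sym2.toFinset_mk_eq, Sym2.toFinset_mk_eq, disjoint_insert_right, disjoint_singleton_right]
  have inv_card_part (w : V) : (#((components (edge u v)).part w) : ℚ)⁻¹ =
      if w ∈ ({u, v} : Finset V) then 1 / 2 else 1 := by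
    rw [part_components_edge]
    split_ifs
    · rw [card_pair huv, Nat.cast_ofNat, one_div]
    · rw [card_singleton, Nat.cast_one, inv_one]
  rw [edgeSet_eq, containmentProb_edgeSet_sup_edge acyclic not_reachable,
    edgeSet_edge_of_ne huv, containmentProb_singleton he, inv_card_part, inv_card_part]
  simp only [disjoint_iff]
  grind

end Moon

section Moments

variable {V : Type*} [Fintype V] [DecidableEq V]

theorem card_not_isDiag_disjoint (s : Finset V) :
    #{f : Sym2 V | ¬f.IsDiag ∧ Disjoint s f.toFinset} = (Fintype.card V - #s).choose 2 := by
  rw [← card_compl, ← Sym2.card_image_offDiag, ← Sym2.filter_image_mk_not_isDiag]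
  congr 1
  ext f
  induction f with | _ x y
  rw [mem_filter_univ, mem_filter, and_comm, ← sym2_eq_image, mk_mem_sym2_iff,
    Sym2.toFinset_mk_eq, disjoint_insert_right, disjoint_singleton_right, mem_compl, mem_compl]

theorem card_not_isDiag : #{f : Sym2 V | ¬f.IsDiag} = (Fintype.card V).choose 2 := by
  simpa using card_not_isDiag_disjoint (∅ : Finset V)

theorem sum_containmentProb_pair_sq {e : Sym2 V} (he : ¬e.IsDiag) :
    ∑ f, containmentProb {e, f} ^ 2 =
      (2 / Fintype.card V : ℚ) ^ 2 + 2 * (Fintype.card V - 2) * (3 / Fintype.card V ^ 2) ^ 2 +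
        (Fintype.card V - 2).choose 2 * (4 / Fintype.card V ^ 2) ^ 2 := by
  have two_le : 2 ≤ Fintype.card V := by
    rw [← e.card_toFinset_of_not_isDiag he]
    exact card_le_univ _
  have card_disjoint : #{f : Sym2 V | ¬f.IsDiag ∧ Disjoint e.toFinset f.toFinset} =
      (Fintype.card V - 2).choose 2 := by
    rw [card_not_isDiag_disjoint, e.card_toFinset_of_not_isDiag he]
  set n := Fintype.card V
  have summand (f : Sym2 V) (hf : ¬f.IsDiag) : containmentProb {e, f} ^ 2 = (3 / n ^ 2 : ℚ) ^ 2 +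
      (if f = e then (2 / n : ℚ) ^ 2 - (3 / n ^ 2) ^ 2 else 0) +
        if Disjoint e.toFinset f.toFinset then (4 / n ^ 2 : ℚ) ^ 2 - (3 / n ^ 2) ^ 2 else 0 := by
    obtain rfl | hne := eq_or_ne f e
    · have not_disjoint : ¬Disjoint f.toFinset f.toFinset := by
        rw [disjoint_self]
        exact f.toFinset_ne_empty
      rw [Set.pair_eq_singleton, containmentProb_singleton he, if_pos rfl, if_neg not_disjoint]
      ring
    · rw [containmentProb_pair he hf hne.symm, if_neg hne]
      split_ifs <;> ring
  calc
    _ = ∑ f : Sym2 V with ¬f.IsDiag, containmentProb {e, f} ^ 2 := by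
      refine (sum_filter_of_ne (p := (¬Sym2.IsDiag ·)) fun f _ hf hdiag ↦ hf ?_).symm
      rw [containmentProb_of_isDiag (e := f) (by simp) hdiag, zero_pow two_ne_zero]
    _ = n.choose 2 * (3 / n ^ 2 : ℚ) ^ 2 + ((2 / n) ^ 2 - (3 / n ^ 2) ^ 2) +
          (n - 2).choose 2 * ((4 / n ^ 2) ^ 2 - (3 / n ^ 2) ^ 2) := by
      rw [sum_congr rfl fun f hf ↦ summand f (mem_filter.1 hf).2, sum_add_distrib,
        sum_add_distrib, sum_const, sum_ite_eq', if_pos (by simpa), ← sum_filter, filter_filter,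
        sum_const, card_not_isDiag, card_disjoint, nsmul_eq_mul, nsmul_eq_mul]
    _ = _ := by
      rw [Nat.cast_choose_two, Nat.cast_choose_two, Nat.cast_sub two_le]
      ring

theorem card_range_subset {ι α : Type*} [Fintype ι] [DecidableEq ι] [Fintype α] (s : Set α)
    [DecidablePred fun f : ι → α ↦ Set.range f ⊆ s] :
    #{f : ι → α | Set.range f ⊆ s} = Nat.card s ^ Fintype.card ι := by
  classical
  have filter_eq : ({f : ι → α | Set.range f ⊆ s} : Finset (ι → α)) =
      Fintype.piFinset fun _ ↦ s.toFinset := by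
    ext f
    simp [Set.range_subset_iff]
  rw [filter_eq, Fintype.card_piFinset, prod_const, card_univ, Set.toFinset_card,
    Nat.card_eq_fintype_card]

open scoped Classical in
theorem card_spanningTreesThrough_sq (S : Set (Sym2 V)) :
    #(spanningTreesThrough S) ^ 2 = #{p : SimpleGraph V × SimpleGraph V |
      (p.1.IsTree ∧ p.2.IsTree) ∧ S ⊆ (p.1 ⊓ p.2).edgeSet} := by
  rw [sq, ← card_product]
  congr 1
  ext p
  simp only [mem_product, mem_spanningTreesThrough, mem_filter_univ, edgeSet_inf,
    Set.subset_inter_iff]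
  tauto

theorem commonEdgesMomentQ_eq_sum (n r : ℕ) :
    commonEdgesMomentQ n r = ∑ f : Fin r → Sym2 (Fin n), containmentProb (Set.range f) ^ 2 := by
  classical
  simp only [containmentProb, div_pow, ← sum_div, Fintype.card_fin, ← pow_mul, mul_comm _ 2]
  rw [commonEdgesMomentQ]
  congr 1
  calc
    _ = ∑ p : SimpleGraph (Fin n) × SimpleGraph (Fin n), ∑ f : Fin r → Sym2 (Fin n),
          if (p.1.IsTree ∧ p.2.IsTree) ∧ Set.range f ⊆ (p.1 ⊓ p.2).edgeSet then (1 : ℚ) else 0 := by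
      refine sum_congr rfl fun p _ ↦ ?_
      split_ifs with hp
      · simp only [hp, true_and, sum_boole, card_range_subset, Fintype.card_fin, Nat.cast_pow]
      · simp [hp]
    _ = _ := by
      rw [sum_comm]
      refine sum_congr rfl fun f _ ↦ ?_
      rw [sum_boole, ← card_spanningTreesThrough_sq, Nat.cast_pow]

theorem commonEdgesMomentQ_one (n : ℕ) :
    commonEdgesMomentQ n 1 = n.choose 2 * (2 / n : ℚ) ^ 2 := by
  calc
    _ = ∑ e : Sym2 (Fin n), containmentProb {e} ^ 2 := by
      rw [commonEdgesMomentQ_eq_sum]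
      exact Fintype.sum_equiv (Equiv.funUnique (Fin 1) _) _ _ fun f ↦ by
        rw [Set.range_unique, Equiv.funUnique_apply]
    _ = ∑ e : Sym2 (Fin n) with ¬e.IsDiag, containmentProb {e} ^ 2 := by
      refine (sum_filter_of_ne (p := (¬Sym2.IsDiag ·)) fun e _ he hdiag ↦ he ?_).symm
      rw [containmentProb_of_isDiag (Set.mem_singleton e) hdiag, zero_pow two_ne_zero]
    _ = ∑ e : Sym2 (Fin n) with ¬e.IsDiag, (2 / n : ℚ) ^ 2 :=
      sum_congr rfl fun e he ↦ by
        rw [containmentProb_singleton (mem_filter.1 he).2, Fintype.card_fin]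
    _ = _ := by rw [sum_const, card_not_isDiag, Fintype.card_fin, nsmul_eq_mul]

theorem commonEdgesMomentQ_two (n : ℕ) :
    commonEdgesMomentQ n 2 = n.choose 2 * ((2 / n : ℚ) ^ 2 + 2 * (n - 2) * (3 / n ^ 2) ^ 2 +
      (n - 2).choose 2 * (4 / n ^ 2) ^ 2) := by
  calc
    _ = ∑ e : Sym2 (Fin n), ∑ f, containmentProb {e, f} ^ 2 := by
      rw [commonEdgesMomentQ_eq_sum, ← (finTwoArrowEquiv _).symm.sum_comp, Fintype.sum_prod_type]
      simp only [finTwoArrowEquiv_symm_apply, Matrix.range_cons_cons_empty]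
    _ = ∑ e : Sym2 (Fin n) with ¬e.IsDiag, ∑ f, containmentProb {e, f} ^ 2 := by
      refine (sum_filter_of_ne (p := (¬Sym2.IsDiag ·)) fun e _ he hdiag ↦
        he (sum_eq_zero fun f _ ↦ ?_)).symm
      rw [containmentProb_of_isDiag (Set.mem_insert e _) hdiag, zero_pow two_ne_zero]
    _ = _ := by
      rw [sum_congr rfl fun e he ↦ sum_containmentProb_pair_sq (mem_filter.1 he).2, sum_const,
        card_not_isDiag, nsmul_eq_mul, Fintype.card_fin]

end Moments

end UniformSpanningTree

open UniformSpanningTree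

/-- For every `n ≥ 2`, the variance `E(Xₙ²) - E(Xₙ)²` of the number
of common edges of two independent uniformly random spanning trees of `K_n` equals
exactly `(n-1)(n-2)(2n-3)/n³`. -/
theorem variance_common_edges (n : ℕ) (hn : 2 ≤ n) :
    commonEdgesMomentQ n 2 - (commonEdgesMomentQ n 1) ^ 2 =
      ((n : ℚ) - 1) * ((n : ℚ) - 2) * (2 * (n : ℚ) - 3) / (n : ℚ) ^ 3 := by
  have ne_zero : (n : ℚ) ≠ 0 := by positivity
  rw [commonEdgesMomentQ_two, commonEdgesMomentQ_one, Nat.cast_choose_two, Nat.cast_choose_two,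
    Nat.cast_sub hn]
  field_simp
  ring
end
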